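/- arXiv:2208.11528 — 2 statements merged into one kernel-verified Lean document; each statement's English description precedes it below -/
import Mathlib

section
/- Let f be an excursion and (f_n) a sequence of excursions with f_n → f for the Skorokhod topology. If f is a pure jump growth (PJG) excursion, then d_L[f_n] → d_L[f] uniformly on [0,1]² and d_T[f_n] → 0 uniformly on [0,1]²; consequently d_V[f_n] → d_V[f] = 2·d_L[f] uniformly on [0,1]². -/
open Set Filter Topology
open scoped Classical

noncomputable section

/-- Left limit of `f` at `t`, with the convention `f(0−) = 0`. -/
def lm (f : ℝ → ℝ) (t : ℝ) : ℝ := if t = 0 then 0 else Function.leftLim f t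

/-- The jump `Δ_t(f) = f t − f(t−)`. -/
def jump (f : ℝ → ℝ) (t : ℝ) : ℝ := f t - lm f t

/-- `inf_{[s,t]} f`. -/
def infIcc (f : ℝ → ℝ) (s t : ℝ) : ℝ := sInf (f '' Icc s t)

/-- An excursion: a càdlàg function on `[0,1]`, nonnegative, vanishing at `1` (and
extended by `0` outside `[0,1]`), all of whose jumps are nonnegative. -/
structure IsExcursion (f : ℝ → ℝ) : Prop where
  nonneg : ∀ t ∈ Icc (0:ℝ) 1, 0 ≤ f t
  zero_outside : ∀ t, t ∉ Icc (0:ℝ) 1 → f t = 0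
  rightCont : ∀ t ∈ Ico (0:ℝ) 1, Tendsto f (𝓝[>] t) (𝓝 (f t))
  leftLimEx : ∀ t ∈ Ioc (0:ℝ) 1, Tendsto f (𝓝[<] t) (𝓝 (Function.leftLim f t))
  one : f 1 = 0
  jump_nonneg : ∀ t ∈ Icc (0:ℝ) 1, 0 ≤ jump f t

/-- The genealogical relation `s ⪯_f t` : `s ≤ t` and `f(s−) ≤ inf_{[s,t]} f`. -/
def pre (f : ℝ → ℝ) (s t : ℝ) : Prop := s ≤ t ∧ lm f s ≤ infIcc f s t

/-- `x_s^t(f) = 1_{s ≤ t} · max(inf_{[s,t]} f − f(s−), 0)`. -/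
def xst (f : ℝ → ℝ) (s t : ℝ) : ℝ := if s ≤ t then max (infIcc f s t - lm f s) 0 else 0

/-- The most recent common ancestor `s ∧_f t`. -/
def mrca (f : ℝ → ℝ) (s t : ℝ) : ℝ := sSup {r : ℝ | 0 ≤ r ∧ pre f r s ∧ pre f r t}

/-- `δ_t(a,b) = min(|a−b|, Δ_t(f) − |a−b|)`, the circle pseudo-distance on `[0, Δ_t(f)]`. -/
def cdel (f : ℝ → ℝ) (t a b : ℝ) : ℝ := min |a - b| (jump f t - |a - b|)

/-- `d_O(s,t) = ∑_{s ≺_f r ⪯_f t} δ_r(0, x_r^t)`. -/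
def dO (f : ℝ → ℝ) (s t : ℝ) : ℝ :=
  ∑' r : ℝ, if pre f s r ∧ s < r ∧ pre f r t then cdel f r 0 (xst f r t) else 0

/-- `d_T(s,t) = f t − inf_{[s,t]} f − ∑_{s ≺_f r ⪯_f t} x_r^t`, intended for `s ⪯_f t`. -/
def dTanc (f : ℝ → ℝ) (s t : ℝ) : ℝ :=
  f t - infIcc f s t - ∑' r : ℝ, if pre f s r ∧ s < r ∧ pre f r t then xst f r t else 0

/-- The looptree pseudo-distance `d_L[f]`. -/
def dL (f : ℝ → ℝ) (s t : ℝ) : ℝ :=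
  cdel f (mrca f s t) (xst f (mrca f s t) s) (xst f (mrca f s t) t)
    + dO f (mrca f s t) s + dO f (mrca f s t) t

/-- The tree pseudo-distance `d_T[f]`. -/
def dT (f : ℝ → ℝ) (s t : ℝ) : ℝ := dTanc f (mrca f s t) s + dTanc f (mrca f s t) t

/-- The vernation pseudo-distance `d_V[f] = d_T[f] + 2·d_L[f]`. -/
def dV (f : ℝ → ℝ) (s t : ℝ) : ℝ := dT f s t + 2 * dL f s t

/-- `Jf(t) = ∑_{r ⪯_f t} x_r^t(f)`. -/
def Jop (f : ℝ → ℝ) (t : ℝ) : ℝ := ∑' r : ℝ, if pre f r t then xst f r t else 0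

/-- `J^ε f(t) = ∑_{r ⪯_f t, Δ_r(f) ≥ ε} x_r^t(f)`. -/
def Jeps (f : ℝ → ℝ) (ε : ℝ) (t : ℝ) : ℝ :=
  ∑' r : ℝ, if pre f r t ∧ ε ≤ jump f r then xst f r t else 0

/-- Pure jump growth (PJG) excursion: `f(t) = ∑_{r ⪯_f t} x_r^t(f)` on `[0,1]`. -/
def IsPJG (f : ℝ → ℝ) : Prop := ∀ t ∈ Icc (0:ℝ) 1, f t = Jop f t

/-- An increasing bijection from `[0,1]` onto itself. -/
def IncBij (l : ℝ → ℝ) : Prop :=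
  StrictMonoOn l (Icc (0:ℝ) 1) ∧ Set.BijOn l (Icc (0:ℝ) 1) (Icc (0:ℝ) 1)

/-- The Skorokhod distance `ρ` on functions `[0,1] → ℝ`. -/
def skor (f g : ℝ → ℝ) : ℝ :=
  sInf {c : ℝ | 0 ≤ c ∧ ∃ l : ℝ → ℝ, IncBij l ∧
    ∀ x ∈ Icc (0:ℝ) 1, |l x - x| ≤ c ∧ |f x - g (l x)| ≤ c}

lemma le_infIcc {f : ℝ → ℝ} {a b c : ℝ} (hab : a ≤ b) (h : ∀ z ∈ Icc a b, c ≤ f z) :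
    c ≤ infIcc f a b := by
  refine le_csInf ⟨f a, a, ⟨le_rfl, hab⟩, rfl⟩ ?_
  rintro _ ⟨z, hz, rfl⟩
  exact h z hz

lemma xst_nonneg (f : ℝ → ℝ) (r t : ℝ) : 0 ≤ xst f r t := by
  unfold xst
  split_ifs
  · exact le_max_right _ _
  · exact le_rfl

lemma xst_eq_zero_of_not_pre {f : ℝ → ℝ} {r t : ℝ} (h : ¬ pre f r t) : xst f r t = 0 := by
  unfold xst
  split_ifs with hrt
  · exact max_eq_right (by
      by_contra hc
      exact h ⟨hrt, by linarith [not_le.mp hc]⟩)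
  · rfl

lemma ite_pre_xst (f : ℝ → ℝ) (r t : ℝ) : (if pre f r t then xst f r t else 0) = xst f r t := by
  split_ifs with h
  · rfl
  · exact (xst_eq_zero_of_not_pre h).symm

namespace IsExcursion

variable {f : ℝ → ℝ}

lemma nonneg_all (hf : IsExcursion f) (x : ℝ) : 0 ≤ f x := by
  by_cases hx : x ∈ Icc (0 : ℝ) 1
  · exact hf.nonneg x hx
  · exact (hf.zero_outside x hx).ge

lemma eq_zero_of_one_le (hf : IsExcursion f) {x : ℝ} (hx : 1 ≤ x) : f x = 0 := by
  rcases hx.eq_or_lt with rfl | h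
  · exact hf.one
  · exact hf.zero_outside x fun h' => absurd h'.2 (not_le.mpr h)

lemma eq_zero_of_neg (hf : IsExcursion f) {x : ℝ} (hx : x < 0) : f x = 0 :=
  hf.zero_outside x fun h' => absurd h'.1 (not_le.mpr hx)

lemma tendsto_right (hf : IsExcursion f) (t : ℝ) : Tendsto f (𝓝[>] t) (𝓝 (f t)) := by
  rcases lt_or_ge t 0 with h | h
  · rw [hf.eq_zero_of_neg h]
    refine tendsto_const_nhds.congr' ?_
    filter_upwards [mem_nhdsWithin_of_mem_nhds (Iio_mem_nhds h)] with x hx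
    exact (hf.eq_zero_of_neg hx).symm
  rcases lt_or_ge t 1 with h1 | h1
  · exact hf.rightCont t ⟨h, h1⟩
  · rw [hf.eq_zero_of_one_le h1]
    refine tendsto_const_nhds.congr' ?_
    filter_upwards [self_mem_nhdsWithin] with x hx
    exact (hf.eq_zero_of_one_le (h1.trans (le_of_lt hx))).symm

lemma tendsto_left_zero (hf : IsExcursion f) {t : ℝ} (h : t ≤ 0 ∨ 1 < t) :
    Tendsto f (𝓝[<] t) (𝓝 0) := by
  refine tendsto_const_nhds.congr' ?_
  rcases h with h | h
  · filter_upwards [self_mem_nhdsWithin] with x hx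
    exact (hf.eq_zero_of_neg (lt_of_lt_of_le hx h)).symm
  · filter_upwards [mem_nhdsWithin_of_mem_nhds (Ioi_mem_nhds h)] with x hx
    exact (hf.eq_zero_of_one_le (le_of_lt hx)).symm

lemma tendsto_lm (hf : IsExcursion f) (t : ℝ) : Tendsto f (𝓝[<] t) (𝓝 (lm f t)) := by
  unfold lm
  split_ifs with h0
  · exact hf.tendsto_left_zero (Or.inl h0.le)
  by_cases h : t ≤ 0 ∨ 1 < t
  · have := hf.tendsto_left_zero h
    rwa [leftLim_eq_of_tendsto this]
  · push Not at h
    exact hf.leftLimEx t h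

lemma lm_eq_zero (hf : IsExcursion f) {t : ℝ} (h : t ≤ 0 ∨ 1 < t) : lm f t = 0 :=
  tendsto_nhds_unique (hf.tendsto_lm t) (hf.tendsto_left_zero h)

lemma lm_le (hf : IsExcursion f) (t : ℝ) : lm f t ≤ f t := by
  by_cases h : t ∈ Icc (0 : ℝ) 1
  · exact sub_nonneg.mp (hf.jump_nonneg t h)
  · rw [hf.lm_eq_zero]
    · exact hf.nonneg_all t
    · rw [mem_Icc, not_and_or, not_le, not_le] at h
      exact h.imp le_of_lt id

lemma jump_nonneg_all (hf : IsExcursion f) (t : ℝ) : 0 ≤ jump f t :=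
  sub_nonneg.mpr (hf.lm_le t)

lemma infIcc_le (hf : IsExcursion f) {a b z : ℝ} (hz : z ∈ Icc a b) : infIcc f a b ≤ f z := by
  refine csInf_le ⟨0, ?_⟩ ⟨z, hz, rfl⟩
  rintro _ ⟨y, -, rfl⟩
  exact hf.nonneg_all y

lemma infIcc_nonneg (hf : IsExcursion f) {a b : ℝ} (hab : a ≤ b) : 0 ≤ infIcc f a b :=
  le_infIcc hab fun z _ => hf.nonneg_all z

lemma infIcc_self (hf : IsExcursion f) (a : ℝ) : infIcc f a a = f a :=
  le_antisymm (hf.infIcc_le ⟨le_rfl, le_rfl⟩)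
    (le_infIcc le_rfl fun z hz => by rw [le_antisymm hz.2 hz.1])

lemma infIcc_mono_left (hf : IsExcursion f) {a a' b : ℝ} (h : a ≤ a') (h' : a' ≤ b) :
    infIcc f a b ≤ infIcc f a' b :=
  le_infIcc h' fun _ hz => hf.infIcc_le ⟨h.trans hz.1, hz.2⟩

lemma infIcc_anti_right (hf : IsExcursion f) {a b b' : ℝ} (h : b ≤ b') (h' : a ≤ b) :
    infIcc f a b' ≤ infIcc f a b :=
  le_infIcc h' fun _ hz => hf.infIcc_le ⟨hz.1, hz.2.trans h⟩

lemma infIcc_le_lm (hf : IsExcursion f) {q r t : ℝ} (hqr : q < r) (hrt : r ≤ t) :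
    infIcc f q t ≤ lm f r := by
  refine ge_of_tendsto (hf.tendsto_lm r) ?_
  filter_upwards [Ioo_mem_nhdsLT hqr] with x hx
  exact hf.infIcc_le ⟨hx.1.le, hx.2.le.trans hrt⟩

lemma pre_of_le (hf : IsExcursion f) {a b c : ℝ} (h : pre f a c) (hab : a ≤ b) (hbc : b ≤ c) :
    pre f a b :=
  ⟨hab, h.2.trans (hf.infIcc_anti_right hbc hab)⟩

lemma xst_self (hf : IsExcursion f) (t : ℝ) : xst f t t = jump f t := by
  rw [xst, if_pos le_rfl, hf.infIcc_self]
  exact max_eq_left (hf.jump_nonneg_all t)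

lemma xst_le_jump (hf : IsExcursion f) (r t : ℝ) : xst f r t ≤ jump f r := by
  unfold xst
  split_ifs with h
  · exact max_le (sub_le_sub_right (hf.infIcc_le ⟨le_rfl, h⟩) _) (hf.jump_nonneg_all r)
  · exact hf.jump_nonneg_all r

lemma xst_le_sub (hf : IsExcursion f) {q r t : ℝ} (hqr : q < r) (hrt : r ≤ t) :
    xst f r t ≤ infIcc f r t - infIcc f q t := by
  rw [xst, if_pos hrt]
  exact max_le (sub_le_sub_left (hf.infIcc_le_lm hqr hrt) _)
    (sub_nonneg.mpr (hf.infIcc_mono_left hqr.le hrt))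

/-- Along an ancestral line the contributions `x_r^t` fill disjoint intervals. -/
lemma sum_xst_le_sub (hf : IsExcursion f) {a t : ℝ} (hat : a ≤ t) (A : Finset ℝ) :
    ∀ q ≤ a, (∀ r ∈ A, q < r ∧ r ≤ a) → ∑ r ∈ A, xst f r t ≤ infIcc f a t - infIcc f q t := by
  induction A using Finset.induction_on_min with
  | empty =>
    intro q hq _
    simpa using hf.infIcc_mono_left hq hat
  | insert b A hb ih =>
    intro q hq hA
    rw [Finset.sum_insert fun h => lt_irrefl _ (hb b h)]
    obtain ⟨hqb, hba⟩ := hA b (Finset.mem_insert_self b A)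
    have h1 := ih b hba fun r hr => ⟨hb r hr, (hA r (Finset.mem_insert_of_mem hr)).2⟩
    have h2 := hf.xst_le_sub hqb (hba.trans hat)
    linarith

lemma sum_ite_xst_le (hf : IsExcursion f) {s t : ℝ} (hst : s ≤ t) (A : Finset ℝ) :
    ∑ r ∈ A, (if s < r then xst f r t else 0) ≤ f t - infIcc f s t := by
  have h := hf.sum_xst_le_sub (le_refl t) (A.filter fun r => s < r ∧ r ≤ t) s hst
    fun r hr => (Finset.mem_filter.mp hr).2
  rw [hf.infIcc_self] at h
  refine le_trans (le_of_eq ?_) h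
  rw [Finset.sum_filter]
  refine Finset.sum_congr rfl fun r _ => ?_
  by_cases h1 : s < r <;> by_cases h2 : r ≤ t <;> simp [h1, h2, xst]

lemma sum_ite_le_xst_le (hf : IsExcursion f) {s t : ℝ} (hst : s ≤ t) (A : Finset ℝ) :
    ∑ r ∈ A, (if s < r then 0 else xst f r t) ≤ infIcc f s t := by
  have hq : ∃ q ≤ s, ∀ r ∈ A.filter (fun r => r ≤ s), q < r ∧ r ≤ s := by
    obtain ⟨q, hq⟩ := (A.finite_toSet.union (finite_singleton s)).bddBelow
    refine ⟨q - 1, ?_, fun r hr => ⟨?_, (Finset.mem_filter.mp hr).2⟩⟩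
    · linarith [hq (Or.inr rfl : s ∈ (A : Set ℝ) ∪ {s})]
    · linarith [hq (Or.inl (Finset.mem_filter.mp hr).1 : r ∈ (A : Set ℝ) ∪ {s})]
  obtain ⟨q, hqs, hq⟩ := hq
  have h := hf.sum_xst_le_sub hst _ q hqs hq
  have h' := hf.infIcc_nonneg (hqs.trans hst)
  refine le_trans (le_of_eq ?_) (h.trans (sub_le_self _ h'))
  rw [Finset.sum_filter]
  refine Finset.sum_congr rfl fun r _ => ?_
  by_cases h1 : s < r
  · simp [h1]
  · simp [h1, not_lt.mp h1]

lemma sum_xst_le (hf : IsExcursion f) (t : ℝ) (A : Finset ℝ) : ∑ r ∈ A, xst f r t ≤ f t := by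
  have h1 := hf.sum_ite_xst_le (le_refl t) A
  have h2 := hf.sum_ite_le_xst_le (le_refl t) A
  have h3 : ∑ r ∈ A, xst f r t = ∑ r ∈ A, (if t < r then xst f r t else 0)
      + ∑ r ∈ A, (if t < r then 0 else xst f r t) := by
    rw [← Finset.sum_add_distrib]
    exact Finset.sum_congr rfl fun r _ => by split_ifs <;> simp
  linarith

lemma summable_xst (hf : IsExcursion f) (t : ℝ) : Summable fun r => xst f r t :=
  summable_of_sum_le (fun r => xst_nonneg f r t) (hf.sum_xst_le t)

lemma cdel_nonneg (hf : IsExcursion f) (r s t : ℝ) : 0 ≤ cdel f r (xst f r s) (xst f r t) := by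
  have h1 := xst_nonneg f r s
  have h2 := xst_nonneg f r t
  have h3 := hf.xst_le_jump r s
  have h4 := hf.xst_le_jump r t
  refine le_min (abs_nonneg _) (sub_nonneg.mpr (abs_le.mpr ⟨?_, ?_⟩)) <;> linarith

lemma cdel_le_add (f : ℝ → ℝ) (r s t : ℝ) :
    cdel f r (xst f r s) (xst f r t) ≤ xst f r s + xst f r t := by
  have h1 := xst_nonneg f r s
  have h2 := xst_nonneg f r t
  refine (min_le_left _ _).trans (abs_le.mpr ⟨?_, ?_⟩) <;> linarith

lemma cdel_comm (f : ℝ → ℝ) (r a b : ℝ) : cdel f r a b = cdel f r b a := by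
  simp only [cdel, abs_sub_comm a b]

lemma cdel_self (hf : IsExcursion f) (r a : ℝ) : cdel f r a a = 0 := by
  simp [cdel, hf.jump_nonneg_all r]

lemma summable_cdel (hf : IsExcursion f) (s t : ℝ) :
    Summable fun r => cdel f r (xst f r s) (xst f r t) :=
  Summable.of_nonneg_of_le (fun r => hf.cdel_nonneg r s t) (fun r => cdel_le_add f r s t)
    ((hf.summable_xst s).add (hf.summable_xst t))

/-- The most recent common ancestor is the largest common ancestor. -/
lemma mrca_isGreatest (hf : IsExcursion f) {s t : ℝ} (hs : 0 ≤ s) (ht : 0 ≤ t) :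
    IsGreatest {r : ℝ | 0 ≤ r ∧ pre f r s ∧ pre f r t} (mrca f s t) := by
  set S : Set ℝ := {r : ℝ | 0 ≤ r ∧ pre f r s ∧ pre f r t} with hS
  have hlm0 : lm f 0 = 0 := if_pos rfl
  have h0 : (0 : ℝ) ∈ S :=
    ⟨le_rfl, ⟨hs, hlm0.trans_le (hf.infIcc_nonneg hs)⟩,
      ⟨ht, hlm0.trans_le (hf.infIcc_nonneg ht)⟩⟩
  have hbdd : BddAbove S := ⟨s, fun r hr => hr.2.1.1⟩
  refine ⟨?_, fun r hr => le_csSup hbdd hr⟩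
  have key : ∀ u, (∀ r ∈ S, pre f r u) → pre f (mrca f s t) u := by
    intro u hu
    have hmu : mrca f s t ≤ u := csSup_le ⟨0, h0⟩ fun r hr => (hu r hr).1
    refine ⟨hmu, le_infIcc hmu fun z hz => le_of_forall_pos_le_add fun ε hε => ?_⟩
    have hev := (hf.tendsto_lm (mrca f s t)).eventually (lt_mem_nhds (sub_lt_self _ hε))
    obtain ⟨a, ha, hau⟩ := mem_nhdsLT_iff_exists_Ioo_subset.mp hev
    obtain ⟨r, hrS, har⟩ := exists_lt_of_lt_csSup ⟨0, h0⟩ (show a < sSup S from ha)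
    have hrm : r ≤ mrca f s t := le_csSup hbdd hrS
    have h1 : lm f (mrca f s t) - ε ≤ lm f r := by
      refine ge_of_tendsto (hf.tendsto_lm r) ?_
      filter_upwards [Ioo_mem_nhdsLT har] with x hx
      exact le_of_lt (hau ⟨hx.1, hx.2.trans_le hrm⟩)
    have h2 := (hu r hrS).2.trans (hf.infIcc_le ⟨hrm.trans hz.1, hz.2⟩)
    linarith
  exact ⟨le_csSup hbdd h0, key s fun r hr => hr.2.1, key t fun r hr => hr.2.2⟩

lemma infIcc_le_of_common (hf : IsExcursion f) {m r s t : ℝ} (hs : m ≤ s) (ht : pre f m t)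
    (hr : r < m) : infIcc f r s ≤ infIcc f r t := by
  refine le_infIcc (hr.le.trans ht.1) fun z hz => ?_
  rcases lt_or_ge z m with h | h
  · exact hf.infIcc_le ⟨hz.1, h.le.trans hs⟩
  · exact (hf.infIcc_le_lm hr hs).trans (ht.2.trans (hf.infIcc_le ⟨h, hz.2⟩))

lemma xst_eq_of_common (hf : IsExcursion f) {m r s t : ℝ} (hs : pre f m s) (ht : pre f m t)
    (hr : r < m) : xst f r s = xst f r t := by
  rw [xst, xst, if_pos (hr.le.trans hs.1), if_pos (hr.le.trans ht.1),
    le_antisymm (hf.infIcc_le_of_common hs.1 ht hr) (hf.infIcc_le_of_common ht.1 hs hr)]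

lemma cdel_eq_ancestral (hf : IsExcursion f) {s t : ℝ} (hs : 0 ≤ s) (ht : 0 ≤ t) (r : ℝ) :
    cdel f r (xst f r s) (xst f r t) =
      (if r = mrca f s t then
        cdel f (mrca f s t) (xst f (mrca f s t) s) (xst f (mrca f s t) t) else 0)
      + (if pre f (mrca f s t) r ∧ mrca f s t < r ∧ pre f r s then
          cdel f r 0 (xst f r s) else 0)
      + (if pre f (mrca f s t) r ∧ mrca f s t < r ∧ pre f r t then
          cdel f r 0 (xst f r t) else 0) := by
  obtain ⟨⟨hm0, hms, hmt⟩, hmax⟩ := hf.mrca_isGreatest hs ht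
  rcases lt_trichotomy r (mrca f s t) with h | h | h
  · rw [hf.xst_eq_of_common hms hmt h, hf.cdel_self]
    simp [h.ne, h.le.not_gt]
  · simp [← h]
  · have hn : ¬ (pre f r s ∧ pre f r t) := fun hh =>
      absurd (hmax ⟨hm0.trans h.le, hh⟩) (not_le.mpr h)
    by_cases h1 : pre f r s
    · have h2 : ¬ pre f r t := fun h2 => hn ⟨h1, h2⟩
      rw [xst_eq_zero_of_not_pre h2, cdel_comm]
      simp [h.ne', h, h1, h2, hf.pre_of_le hms h.le h1.1]
    · rw [xst_eq_zero_of_not_pre h1]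
      by_cases h2 : pre f r t
      · simp [h.ne', h, h1, h2, hf.pre_of_le hmt h.le h2.1]
      · rw [xst_eq_zero_of_not_pre h2, hf.cdel_self]
        simp [h.ne', h1, h2]

lemma summable_dO (hf : IsExcursion f) (m t : ℝ) :
    Summable fun r => if pre f m r ∧ m < r ∧ pre f r t then cdel f r 0 (xst f r t) else 0 := by
  have hx : ∀ r, 0 ≤ cdel f r 0 (xst f r t) ∧ cdel f r 0 (xst f r t) ≤ xst f r t := by
    intro r
    have h1 := xst_nonneg f r t
    have h2 := hf.xst_le_jump r t
    rw [cdel, zero_sub, abs_neg, abs_of_nonneg h1]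
    exact ⟨le_min h1 (sub_nonneg.mpr h2), min_le_left _ _⟩
  refine Summable.of_nonneg_of_le (fun r => ?_) (fun r => ?_) (hf.summable_xst t)
  · split_ifs
    · exact (hx r).1
    · exact le_rfl
  · split_ifs
    · exact (hx r).2
    · exact xst_nonneg f r t

/-- The looptree distance is the sum over all loops of the distances between projections. -/
lemma dL_eq_tsum (hf : IsExcursion f) {s t : ℝ} (hs : 0 ≤ s) (ht : 0 ≤ t) :
    dL f s t = ∑' r, cdel f r (xst f r s) (xst f r t) := by
  rw [tsum_congr (hf.cdel_eq_ancestral hs ht), Summable.tsum_add _ (hf.summable_dO _ t),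
    Summable.tsum_add _ (hf.summable_dO _ s), tsum_ite_eq]
  · rfl
  · exact (hasSum_ite_eq _ _).summable
  · exact (hasSum_ite_eq _ _).summable.add (hf.summable_dO _ s)

lemma dL_approx (hf : IsExcursion f) {s t : ℝ} (hs : 0 ≤ s) (ht : 0 ≤ t) {Q : Finset ℝ} {η : ℝ}
    (hQs : f s ≤ ∑ r ∈ Q, xst f r s + η) (hQt : f t ≤ ∑ r ∈ Q, xst f r t + η) :
    |dL f s t - ∑ r ∈ Q, cdel f r (xst f r s) (xst f r t)| ≤ 2 * η := by
  rw [hf.dL_eq_tsum hs ht]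
  have hlow := (hf.summable_cdel s t).sum_le_tsum Q fun r _ => hf.cdel_nonneg r s t
  have hup : ∑' r, cdel f r (xst f r s) (xst f r t)
      ≤ ∑ r ∈ Q, cdel f r (xst f r s) (xst f r t) + 2 * η := by
    refine Real.tsum_le_of_sum_le (fun r => hf.cdel_nonneg r s t) fun A => ?_
    have h1 : ∑ r ∈ A, cdel f r (xst f r s) (xst f r t)
        ≤ ∑ r ∈ A ∪ Q, cdel f r (xst f r s) (xst f r t) :=
      Finset.sum_le_sum_of_subset_of_nonneg Finset.subset_union_left
        fun r _ _ => hf.cdel_nonneg r s t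
    have h2 : ∑ r ∈ (A ∪ Q) \ Q, cdel f r (xst f r s) (xst f r t)
        ≤ ∑ r ∈ (A ∪ Q) \ Q, xst f r s + ∑ r ∈ (A ∪ Q) \ Q, xst f r t := by
      rw [← Finset.sum_add_distrib]
      exact Finset.sum_le_sum fun r _ => cdel_le_add f r s t
    have h3 := Finset.sum_sdiff (f := fun r => cdel f r (xst f r s) (xst f r t))
      (Finset.subset_union_right : Q ⊆ A ∪ Q)
    have h4 := Finset.sum_sdiff (f := fun r => xst f r s)
      (Finset.subset_union_right : Q ⊆ A ∪ Q)
    have h5 := Finset.sum_sdiff (f := fun r => xst f r t)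
      (Finset.subset_union_right : Q ⊆ A ∪ Q)
    have h6 := hf.sum_xst_le s (A ∪ Q)
    have h7 := hf.sum_xst_le t (A ∪ Q)
    linarith
  rw [abs_le]
  constructor <;> linarith

lemma dTanc_mem (hf : IsExcursion f) {m t : ℝ} (hm : pre f m t) {Q : Finset ℝ} {η : ℝ}
    (hQ : f t ≤ ∑ r ∈ Q, xst f r t + η) : 0 ≤ dTanc f m t ∧ dTanc f m t ≤ η := by
  have heq : ∀ r, (if pre f m r ∧ m < r ∧ pre f r t then xst f r t else 0)
      = if m < r then xst f r t else 0 := by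
    intro r
    by_cases h1 : m < r
    · by_cases h2 : pre f r t
      · simp [h1, h2, hf.pre_of_le hm h1.le h2.1]
      · simp [h2, xst_eq_zero_of_not_pre h2]
    · simp [h1]
  have hnn : ∀ r, 0 ≤ if m < r then xst f r t else 0 := fun r => by
    split_ifs
    · exact xst_nonneg f r t
    · exact le_rfl
  have hsum : Summable fun r => if m < r then xst f r t else 0 :=
    summable_of_sum_le hnn (hf.sum_ite_xst_le hm.1)
  rw [dTanc, tsum_congr heq]
  have h1 := Real.tsum_le_of_sum_le hnn (hf.sum_ite_xst_le hm.1)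
  have h2 := hsum.sum_le_tsum Q fun r _ => hnn r
  have h3 := hf.sum_ite_le_xst_le hm.1 Q
  have h4 : ∑ r ∈ Q, xst f r t = ∑ r ∈ Q, (if m < r then xst f r t else 0)
      + ∑ r ∈ Q, (if m < r then 0 else xst f r t) := by
    rw [← Finset.sum_add_distrib]
    exact Finset.sum_congr rfl fun r _ => by split_ifs <;> simp
  constructor <;> linarith

lemma abs_dT_le (hf : IsExcursion f) {s t : ℝ} (hs : 0 ≤ s) (ht : 0 ≤ t) {Q : Finset ℝ} {η : ℝ}
    (hQs : f s ≤ ∑ r ∈ Q, xst f r s + η) (hQt : f t ≤ ∑ r ∈ Q, xst f r t + η) :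
    |dT f s t| ≤ 2 * η := by
  obtain ⟨⟨-, hms, hmt⟩, -⟩ := hf.mrca_isGreatest hs ht
  have h1 := hf.dTanc_mem hms hQs
  have h2 := hf.dTanc_mem hmt hQt
  rw [dT, abs_of_nonneg (add_nonneg h1.1 h2.1)]
  linarith

/-- Since all jumps are upward, `f` cannot drop much over a short interval. -/
lemma exists_forall_sub_le (hf : IsExcursion f) (t : ℝ) {ε : ℝ} (hε : 0 < ε) :
    ∃ δ > 0, ∀ v w, t - δ < v → v ≤ w → w < t + δ → f v - ε ≤ f w := by
  have hl := (hf.tendsto_lm t).eventually (Metric.ball_mem_nhds _ (half_pos hε))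
  have hr := (hf.tendsto_right t).eventually (Metric.ball_mem_nhds _ (half_pos hε))
  obtain ⟨a, ha, hau⟩ := mem_nhdsLT_iff_exists_Ioo_subset.mp hl
  obtain ⟨b, hb, hbu⟩ := mem_nhdsGT_iff_exists_Ioo_subset.mp hr
  rw [mem_Iio] at ha
  rw [mem_Ioi] at hb
  refine ⟨min (t - a) (b - t), lt_min (sub_pos.mpr ha) (sub_pos.mpr hb), fun v w hv hvw hw => ?_⟩
  have h1 := min_le_left (t - a) (b - t)
  have h2 := min_le_right (t - a) (b - t)
  have hL : ∀ x, t - min (t - a) (b - t) < x → x < t → |f x - lm f t| < ε / 2 :=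
    fun x hx hx' => hau ⟨by linarith, hx'⟩
  have hR : ∀ x, x < t + min (t - a) (b - t) → t ≤ x → |f x - f t| < ε / 2 := by
    intro x hx hx'
    rcases hx'.eq_or_lt with rfl | h
    · simpa using hε
    · exact hbu ⟨h, by linarith⟩
  have hj := hf.lm_le t
  rcases lt_or_ge w t with h | h
  · have e1 := abs_lt.mp (hL v hv (hvw.trans_lt h))
    have e2 := abs_lt.mp (hL w (hv.trans_le hvw) h)
    linarith [e1.1, e1.2, e2.1, e2.2]
  · have e2 := abs_lt.mp (hR w hw h)
    rcases lt_or_ge v t with h' | h'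
    · have e1 := abs_lt.mp (hL v hv h')
      linarith [e1.1, e1.2, e2.1, e2.2]
    · have e1 := abs_lt.mp (hR v (hvw.trans_lt hw) h')
      linarith [e1.1, e1.2, e2.1, e2.2]

lemma continuous_infIcc (hf : IsExcursion f) (r : ℝ) :
    Continuous fun u => infIcc f r (max u r) := by
  refine Metric.continuous_iff.mpr fun u ε hε => ?_
  obtain ⟨δ, hδ, h⟩ := hf.exists_forall_sub_le u (half_pos hε)
  have key : ∀ v w, u - δ < v → v ≤ w → w < u + δ →
      infIcc f r (max w r) ≤ infIcc f r (max v r) ∧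
      infIcc f r (max v r) - ε / 2 ≤ infIcc f r (max w r) := by
    intro v w hv hvw hw
    refine ⟨hf.infIcc_anti_right (max_le_max_right r hvw) (le_max_right _ _),
      le_infIcc (le_max_right _ _) fun z hz => ?_⟩
    rcases le_or_gt z (max v r) with hzv | hzv
    · linarith [hf.infIcc_le ⟨hz.1, hzv⟩]
    · have hzw : z ≤ w := (le_max_iff.mp hz.2).resolve_right
        (not_le.mpr ((le_max_right v r).trans_lt hzv))
      have h1 := h (max v r) z (hv.trans_le (le_max_left _ _)) hzv.le (hzw.trans_lt hw)
      linarith [hf.infIcc_le (⟨le_max_right v r, le_rfl⟩ : max v r ∈ Icc r (max v r))]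
  refine ⟨δ, hδ, fun x hx => ?_⟩
  rw [Real.dist_eq, abs_lt] at hx
  rw [Real.dist_eq, abs_lt]
  rcases le_total x u with hxu | hxu
  · obtain ⟨h1, h2⟩ := key x u (by linarith) hxu (by linarith)
    constructor <;> linarith
  · obtain ⟨h1, h2⟩ := key u x (by linarith) hxu (by linarith)
    constructor <;> linarith

lemma continuous_xst_max (hf : IsExcursion f) (r : ℝ) : Continuous fun u => xst f r (max u r) := by
  simp only [xst, le_max_right, if_true]
  exact ((hf.continuous_infIcc r).sub continuous_const).max continuous_const

lemma tendsto_xst_right (hf : IsExcursion f) (r t : ℝ) :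
    Tendsto (fun u => xst f r u) (𝓝[>] t) (𝓝 (xst f r t)) := by
  rcases lt_or_ge t r with h | h
  · refine Tendsto.congr' ?_ tendsto_const_nhds
    filter_upwards [mem_nhdsWithin_of_mem_nhds (Iio_mem_nhds h)] with u hu
    rw [xst, if_neg (not_le.mpr h), xst, if_neg (not_le.mpr hu)]
  · have hc := ((hf.continuous_xst_max r).tendsto t).mono_left
      (nhdsWithin_le_nhds (s := Ioi t))
    rw [max_eq_left h] at hc
    refine hc.congr' ?_
    filter_upwards [self_mem_nhdsWithin] with u hu
    rw [max_eq_left (h.trans (le_of_lt hu))]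

lemma tendsto_xst_left (hf : IsExcursion f) {r t : ℝ} (hrt : r ≠ t) :
    Tendsto (fun u => xst f r u) (𝓝[<] t) (𝓝 (xst f r t)) := by
  rcases hrt.lt_or_gt with h | h
  · have hc := ((hf.continuous_xst_max r).tendsto t).mono_left
      (nhdsWithin_le_nhds (s := Iio t))
    rw [max_eq_left h.le] at hc
    refine hc.congr' ?_
    filter_upwards [mem_nhdsWithin_of_mem_nhds (Ioi_mem_nhds h)] with u hu
    rw [max_eq_left (le_of_lt hu)]
  · refine Tendsto.congr' ?_ tendsto_const_nhds
    filter_upwards [mem_nhdsWithin_of_mem_nhds (Iio_mem_nhds h)] with u hu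
    rw [xst, if_neg (not_le.mpr h), xst, if_neg (not_le.mpr hu)]

lemma exists_finset_eventually (hf : IsExcursion f) (hP : IsPJG f) {t : ℝ} (ht : t ∈ Icc (0 : ℝ) 1)
    {η : ℝ} (hη : 0 < η) : ∃ R : Finset ℝ, ∀ᶠ u in 𝓝 t, f u ≤ ∑ r ∈ R, xst f r u + η := by
  have hsum : HasSum (fun r => xst f r t) (f t) := by
    have h := hP t ht
    rw [Jop, tsum_congr (ite_pre_xst f · t)] at h
    rw [h]
    exact (hf.summable_xst t).hasSum
  obtain ⟨R₀, hR₀⟩ :=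
    (hsum.eventually (lt_mem_nhds (sub_lt_self _ (half_pos hη)))).exists_forall_of_atTop
  have hR : f t - η / 2 < ∑ r ∈ insert t R₀, xst f r t := hR₀ _ (Finset.subset_insert t R₀)
  set R := insert t R₀ with hRdef
  have htR : t ∈ R := Finset.mem_insert_self t R₀
  refine ⟨R, ?_⟩
  have hright : ∀ᶠ u in 𝓝[>] t, f u ≤ ∑ r ∈ R, xst f r u + η := by
    have hlim : Tendsto (fun u => f u - ∑ r ∈ R, xst f r u) (𝓝[>] t)
        (𝓝 (f t - ∑ r ∈ R, xst f r t)) :=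
      (hf.tendsto_right t).sub (tendsto_finsetSum _ fun r _ => hf.tendsto_xst_right r t)
    filter_upwards [hlim.eventually (gt_mem_nhds (show _ < η by linarith))] with u hu
    linarith
  have hleft : ∀ᶠ u in 𝓝[<] t, f u ≤ ∑ r ∈ R, xst f r u + η := by
    have hlim : Tendsto (fun u => f u - ∑ r ∈ R.erase t, xst f r u) (𝓝[<] t)
        (𝓝 (lm f t - ∑ r ∈ R.erase t, xst f r t)) :=
      (hf.tendsto_lm t).sub (tendsto_finsetSum _ fun r hr =>
        hf.tendsto_xst_left (Finset.ne_of_mem_erase hr))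
    have hj := Finset.sum_erase_add R (fun r => xst f r t) htR
    simp only [hf.xst_self t, jump] at hj
    filter_upwards [hlim.eventually (gt_mem_nhds (show _ < η by linarith))] with u hu
    have := Finset.sum_le_sum_of_subset_of_nonneg (Finset.erase_subset t R)
      fun r _ _ => xst_nonneg f r u
    linarith
  rw [← nhdsLT_sup_nhdsGE, ← Ioi_insert, nhdsWithin_insert]
  refine eventually_sup.mpr ⟨hleft, eventually_sup.mpr ⟨?_, hright⟩⟩
  exact eventually_pure.mpr (by linarith)

/-- A pure jump growth excursion is uniformly exhausted by finitely many jump times. -/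
lemma exists_finset_approx (hf : IsExcursion f) (hP : IsPJG f) {η : ℝ} (hη : 0 < η) :
    ∃ R : Finset ℝ, ∀ u ∈ Icc (0 : ℝ) 1, f u ≤ ∑ r ∈ R, xst f r u + η := by
  refine isCompact_Icc.induction_on
    (p := fun S => ∃ R : Finset ℝ, ∀ u ∈ S, f u ≤ ∑ r ∈ R, xst f r u + η) ⟨∅, by simp⟩
    (fun S T hST ⟨R, hR⟩ => ⟨R, fun u hu => hR u (hST hu)⟩) ?_ fun t ht => ?_
  · rintro S T ⟨R, hR⟩ ⟨R', hR'⟩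
    refine ⟨R ∪ R', fun u hu => ?_⟩
    rcases hu with hu | hu
    · have := Finset.sum_le_sum_of_subset_of_nonneg (Finset.subset_union_left : R ⊆ R ∪ R')
        fun r _ _ => xst_nonneg f r u
      linarith [hR u hu]
    · have := Finset.sum_le_sum_of_subset_of_nonneg (Finset.subset_union_right : R' ⊆ R ∪ R')
        fun r _ _ => xst_nonneg f r u
      linarith [hR' u hu]
  · obtain ⟨R, hR⟩ := hf.exists_finset_eventually hP ht hη
    exact ⟨_, mem_nhdsWithin_of_mem_nhds hR, R, fun u hu => hu⟩

lemma exists_bound (hf : IsExcursion f) : ∃ M, ∀ u ∈ Icc (0 : ℝ) 1, f u ≤ M := by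
  refine isCompact_Icc.induction_on (p := fun S => ∃ M, ∀ u ∈ S, f u ≤ M) ⟨0, by simp⟩
    (fun S T hST ⟨M, hM⟩ => ⟨M, fun u hu => hM u (hST hu)⟩) ?_ fun t _ => ?_
  · rintro S T ⟨M, hM⟩ ⟨M', hM'⟩
    exact ⟨max M M', fun u hu => hu.elim (fun h => (hM u h).trans (le_max_left _ _))
      fun h => (hM' u h).trans (le_max_right _ _)⟩
  · have hl := (hf.tendsto_lm t).eventually (gt_mem_nhds (lt_add_one _))
    have hr := (hf.tendsto_right t).eventually (gt_mem_nhds (lt_add_one _))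
    refine ⟨{u | f u ≤ f t + 1}, mem_nhdsWithin_of_mem_nhds ?_, f t + 1, fun u hu => hu⟩
    rw [← nhdsLT_sup_nhdsGE, ← Ioi_insert, nhdsWithin_insert]
    refine mem_sup.mpr ⟨?_, mem_sup.mpr ⟨?_, ?_⟩⟩
    · filter_upwards [hl] with u hu
      exact hu.le.trans (add_le_add_left (hf.lm_le t) 1)
    · exact mem_pure.mpr (by simp)
    · filter_upwards [hr] with u hu
      exact hu.le

lemma cdel_triangle (hf : IsExcursion f) (r a b c : ℝ) :
    cdel f r (xst f r a) (xst f r c) ≤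
      cdel f r (xst f r a) (xst f r b) + cdel f r (xst f r b) (xst f r c) := by
  have ha := xst_nonneg f r a
  have hb := xst_nonneg f r b
  have hc := xst_nonneg f r c
  have ha' := hf.xst_le_jump r a
  have hb' := hf.xst_le_jump r b
  have hc' := hf.xst_le_jump r c
  unfold cdel
  rcases abs_cases (xst f r a - xst f r b) with h1 | h1 <;>
  rcases abs_cases (xst f r b - xst f r c) with h2 | h2 <;>
  rcases abs_cases (xst f r a - xst f r c) with h3 | h3 <;>
  rw [h1.1, h2.1, h3.1] <;>
  simp only [min_def] <;> split_ifs <;> linarith [h1.2, h2.2, h3.2]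

lemma cdel_le_abs_sub (hf : IsExcursion f) (r u v : ℝ) :
    cdel f r (xst f r u) (xst f r v) ≤ |xst f r (max u r) - xst f r (max v r)| := by
  wlog h : u ≤ v generalizing u v
  · rw [cdel_comm, abs_sub_comm]
    exact this v u (le_of_not_ge h)
  rcases le_or_gt r u with hu | hu
  · rw [max_eq_left hu, max_eq_left (hu.trans h)]
    exact min_le_left _ _
  · have hxu : xst f r u = 0 := if_neg (not_le.mpr hu)
    rcases le_or_gt r v with hv | hv
    · rw [max_eq_right hu.le, max_eq_left hv, hf.xst_self, hxu]
      refine (min_le_right _ _).trans (le_trans (le_of_eq ?_) (le_abs_self _))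
      rw [zero_sub, abs_neg, abs_of_nonneg (xst_nonneg f r v)]
    · have hxv : xst f r v = 0 := if_neg (not_le.mpr hv)
      rw [hxu, hxv, hf.cdel_self]
      exact abs_nonneg _

lemma abs_cdel_sub_le (hf : IsExcursion f) (r s t s' t' : ℝ) :
    |cdel f r (xst f r s') (xst f r t') - cdel f r (xst f r s) (xst f r t)| ≤
      |xst f r (max s' r) - xst f r (max s r)| + |xst f r (max t' r) - xst f r (max t r)| := by
  have h1 := hf.cdel_triangle r s' s t'
  have h2 := hf.cdel_triangle r s t t'
  have h3 := hf.cdel_triangle r s s' t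
  have h4 := hf.cdel_triangle r s' t' t
  have h5 := hf.cdel_le_abs_sub r s' s
  have h6 := hf.cdel_le_abs_sub r t' t
  have h7 := cdel_comm f r (xst f r s) (xst f r s')
  have h8 := cdel_comm f r (xst f r t) (xst f r t')
  rw [abs_le]
  constructor <;> linarith

end IsExcursion

section TimeChange

variable {f g : ℝ → ℝ} {e : ℝ ≃o ℝ} {c : ℝ}

lemma abs_infIcc_sub_le (hf : IsExcursion f) (hg : IsExcursion g)
    (h : ∀ x, |g x - f (e x)| ≤ c) {a b : ℝ} (hab : a ≤ b) :
    |infIcc g a b - infIcc f (e a) (e b)| ≤ c := by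
  have hab' : e a ≤ e b := e.monotone hab
  have h1 : infIcc f (e a) (e b) - c ≤ infIcc g a b := le_infIcc hab fun z hz => by
    have := hf.infIcc_le (⟨e.monotone hz.1, e.monotone hz.2⟩ : e z ∈ Icc (e a) (e b))
    linarith [(abs_le.mp (h z)).1]
  have h2 : infIcc g a b - c ≤ infIcc f (e a) (e b) := le_infIcc hab' fun z hz => by
    have := hg.infIcc_le (⟨e.le_symm_apply.mpr hz.1, e.symm_apply_le.mpr hz.2⟩ :
      e.symm z ∈ Icc a b)
    have h3 := h (e.symm z)
    rw [e.apply_symm_apply] at h3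
    linarith [(abs_le.mp h3).2]
  rw [abs_le]
  constructor <;> linarith

lemma abs_lm_sub_le (hf : IsExcursion f) (hg : IsExcursion g)
    (h : ∀ x, |g x - f (e x)| ≤ c) (a : ℝ) : |lm g a - lm f (e a)| ≤ c := by
  have he : Tendsto e (𝓝[<] a) (𝓝[<] (e a)) :=
    tendsto_nhdsWithin_iff.mpr ⟨(e.continuous.tendsto a).mono_left nhdsWithin_le_nhds, by
      filter_upwards [self_mem_nhdsWithin] with x hx
      exact e.strictMono hx⟩
  exact le_of_tendsto ((hg.tendsto_lm a).sub ((hf.tendsto_lm (e a)).comp he)).abs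
    (Eventually.of_forall h)

lemma abs_jump_sub_le (hf : IsExcursion f) (hg : IsExcursion g)
    (h : ∀ x, |g x - f (e x)| ≤ c) (a : ℝ) : |jump g a - jump f (e a)| ≤ 2 * c := by
  have h1 := abs_le.mp (h a)
  have h2 := abs_le.mp (abs_lm_sub_le hf hg h a)
  rw [jump, jump, abs_le]
  constructor <;> linarith [h1.1, h1.2, h2.1, h2.2]

lemma abs_xst_sub_le (hf : IsExcursion f) (hg : IsExcursion g)
    (h : ∀ x, |g x - f (e x)| ≤ c) (a b : ℝ) : |xst g a b - xst f (e a) (e b)| ≤ 2 * c := by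
  simp only [xst, e.le_iff_le]
  split_ifs with hab
  · refine (abs_max_sub_max_le_abs _ _ _).trans ?_
    have h1 := abs_le.mp (abs_infIcc_sub_le hf hg h hab)
    have h2 := abs_le.mp (abs_lm_sub_le hf hg h a)
    rw [abs_le]
    constructor <;> linarith [h1.1, h1.2, h2.1, h2.2]
  · rw [sub_zero, abs_zero]
    linarith [(abs_nonneg _).trans (h a)]

lemma abs_cdel_timeChange_sub_le (hf : IsExcursion f) (hg : IsExcursion g)
    (h : ∀ x, |g x - f (e x)| ≤ c) (a s t : ℝ) :
    |cdel g a (xst g a s) (xst g a t)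
      - cdel f (e a) (xst f (e a) (e s)) (xst f (e a) (e t))| ≤ 6 * c := by
  have h1 := abs_le.mp (abs_xst_sub_le hf hg h a s)
  have h2 := abs_le.mp (abs_xst_sub_le hf hg h a t)
  have h3 := abs_le.mp (abs_jump_sub_le hf hg h a)
  have hc : 0 ≤ c := (abs_nonneg _).trans (h a)
  have h4 : |(|xst g a s - xst g a t|) - (|xst f (e a) (e s) - xst f (e a) (e t)|)| ≤ 4 * c := by
    refine (abs_abs_sub_abs_le _ _).trans ?_
    rw [abs_le]
    constructor <;> linarith [h1.1, h1.2, h2.1, h2.2]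
  have h5 := abs_le.mp h4
  unfold cdel
  refine (abs_min_sub_min_le_max _ _ _ _).trans (max_le (h4.trans (by linarith)) ?_)
  rw [abs_le]
  constructor <;> linarith [h5.1, h5.2, h3.1, h3.2]

lemma timeChange_approx (hf : IsExcursion f) (hg : IsExcursion g)
    (h : ∀ x, |g x - f (e x)| ≤ c) {R : Finset ℝ} {η u : ℝ}
    (hR : f (e u) ≤ ∑ r ∈ R, xst f r (e u) + η) :
    g u ≤ ∑ r ∈ R.map e.symm.toEmbedding, xst g r u + (η + c + R.card * (2 * c)) := by
  rw [Finset.sum_map]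
  have h1 : ∑ r ∈ R, xst f r (e u) ≤ ∑ r ∈ R, (xst g (e.symm r) u + 2 * c) :=
    Finset.sum_le_sum fun r _ => by
      have h2 := abs_xst_sub_le hf hg h (e.symm r) u
      rw [e.apply_symm_apply] at h2
      linarith [(abs_le.mp h2).1]
  rw [Finset.sum_add_distrib, Finset.sum_const, nsmul_eq_mul] at h1
  have h2 := (abs_le.mp (h u)).2
  simp only [RelIso.coe_toEmbedding] at *
  linarith!

lemma abs_dL_timeChange_sub_le (hf : IsExcursion f) (hg : IsExcursion g)
    (h : ∀ x, |g x - f (e x)| ≤ c) {R : Finset ℝ} {η ω s t : ℝ} (hs : 0 ≤ s) (ht : 0 ≤ t)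
    (hR : ∀ u ∈ ({s, t, e s, e t} : Set ℝ), f u ≤ ∑ r ∈ R, xst f r u + η)
    (hω : ∀ r ∈ R, ∀ u ∈ ({s, t} : Set ℝ), |xst f r (max (e u) r) - xst f r (max u r)| ≤ ω) :
    |dL g s t - dL f s t| ≤
      2 * (η + c + R.card * (2 * c)) + 2 * η + R.card * (6 * c + 2 * ω) := by
  have h1 := hf.dL_approx hs ht (hR s (by simp)) (hR t (by simp))
  have h2 := hg.dL_approx hs ht (timeChange_approx hf hg h (hR (e s) (by simp)))
    (timeChange_approx hf hg h (hR (e t) (by simp)))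
  rw [Finset.sum_map] at h2
  have h3 : |∑ r ∈ R, cdel g (e.symm r) (xst g (e.symm r) s) (xst g (e.symm r) t)
      - ∑ r ∈ R, cdel f r (xst f r s) (xst f r t)| ≤ R.card * (6 * c + 2 * ω) := by
    rw [← Finset.sum_sub_distrib, ← nsmul_eq_mul]
    refine (Finset.abs_sum_le_sum_abs _ _).trans (Finset.sum_le_card_nsmul _ _ _ fun r hr => ?_)
    have h4 := abs_cdel_timeChange_sub_le hf hg h (e.symm r) s t
    rw [e.apply_symm_apply] at h4
    have h5 := hf.abs_cdel_sub_le r s t (e s) (e t)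
    have h6 := hω r hr s (by simp)
    have h7 := hω r hr t (by simp)
    have h8 := abs_sub_le (cdel g (e.symm r) (xst g (e.symm r) s) (xst g (e.symm r) t))
      (cdel f r (xst f r (e s)) (xst f r (e t))) (cdel f r (xst f r s) (xst f r t))
    linarith
  have e1 := abs_le.mp h1
  have e2 := abs_le.mp h2
  have e3 := abs_le.mp h3
  rw [abs_le]
  constructor <;> linarith! [e1.1, e1.2, e2.1, e2.2, e3.1, e3.2]

end TimeChange

/-- An increasing bijection of `[0,1]`, extended by the identity to the whole line. -/
lemma IncBij.exists_orderIso {l : ℝ → ℝ} (hl : IncBij l) :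
    ∃ e : ℝ ≃o ℝ, (∀ x ∈ Icc (0 : ℝ) 1, e x = l x) ∧ ∀ x ∉ Icc (0 : ℝ) 1, e x = x := by
  set m : ℝ → ℝ := fun x => if x ∈ Icc (0 : ℝ) 1 then l x else x with hm
  have hin : ∀ x ∈ Icc (0 : ℝ) 1, m x = l x := fun x hx => if_pos hx
  have hout : ∀ x ∉ Icc (0 : ℝ) 1, m x = x := fun x hx => if_neg hx
  have hmono : StrictMono m := by
    intro x y hxy
    by_cases hx : x ∈ Icc (0 : ℝ) 1 <;> by_cases hy : y ∈ Icc (0 : ℝ) 1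
    · rw [hin x hx, hin y hy]
      exact hl.1 hx hy hxy
    · rw [hin x hx, hout y hy]
      have h1 : 1 < y := not_le.mp fun h => hy ⟨hx.1.trans hxy.le, h⟩
      exact (hl.2.mapsTo hx).2.trans_lt h1
    · rw [hout x hx, hin y hy]
      have h1 : x < 0 := not_le.mp fun h => hx ⟨h, hxy.le.trans hy.2⟩
      exact h1.trans_le (hl.2.mapsTo hy).1
    · rwa [hout x hx, hout y hy]
  have hsurj : Function.Surjective m := by
    intro y
    by_cases hy : y ∈ Icc (0 : ℝ) 1
    · obtain ⟨x, hx, rfl⟩ := hl.2.surjOn hy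
      exact ⟨x, hin x hx⟩
    · exact ⟨y, hout y hy⟩
  exact ⟨hmono.orderIsoOfSurjective m hsurj, hin, hout⟩

lemma exists_orderIso_of_skor_lt {f g : ℝ → ℝ} (hf : IsExcursion f) (hg : IsExcursion g) {c : ℝ}
    (h : skor g f < c) : ∃ e : ℝ ≃o ℝ, (∀ x ∈ Icc (0 : ℝ) 1, e x ∈ Icc (0 : ℝ) 1 ∧ |e x - x| ≤ c) ∧
      ∀ x, |g x - f (e x)| ≤ c := by
  obtain ⟨M, hM⟩ := hf.exists_bound
  obtain ⟨N, hN⟩ := hg.exists_bound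
  have hM0 := (hf.nonneg_all 0).trans (hM 0 (by simp))
  have hN0 := (hg.nonneg_all 0).trans (hN 0 (by simp))
  obtain ⟨c', ⟨hc', l, hl, hlc⟩, hlt⟩ := exists_lt_of_csInf_lt (by
    refine ⟨M + N, by linarith, id, ⟨strictMono_id.strictMonoOn _, bijOn_id _⟩, fun x hx => ?_⟩
    refine ⟨by simpa using by linarith, abs_le.mpr ⟨?_, ?_⟩⟩ <;>
    linarith [hM x hx, hN x hx, hf.nonneg_all x, hg.nonneg_all x, show f (id x) = f x from rfl]) h
  obtain ⟨e, hin, hout⟩ := hl.exists_orderIso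
  refine ⟨e, fun x hx => ?_, fun x => ?_⟩
  · rw [hin x hx]
    exact ⟨hl.2.mapsTo hx, (hlc x hx).1.trans hlt.le⟩
  by_cases hx : x ∈ Icc (0 : ℝ) 1
  · rw [hin x hx]
    exact (hlc x hx).2.trans hlt.le
  · rw [hout x hx, hf.zero_outside x hx, hg.zero_outside x hx, sub_self, abs_zero]
    exact hc'.trans hlt.le

lemma IsExcursion.exists_modulus {f : ℝ → ℝ} (hf : IsExcursion f) (R : Finset ℝ) {ω : ℝ}
    (hω : 0 < ω) : ∀ᶠ c in 𝓝[>] (0 : ℝ), ∀ r ∈ R, ∀ u ∈ Icc (0 : ℝ) 1, ∀ v ∈ Icc (0 : ℝ) 1,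
      |u - v| ≤ c → |xst f r (max u r) - xst f r (max v r)| ≤ ω := by
  refine (Filter.eventually_all_finset R).mpr fun r _ => ?_
  obtain ⟨δ, hδ, h⟩ := Metric.uniformContinuousOn_iff.mp
    (isCompact_Icc.uniformContinuousOn_of_continuous
      (hf.continuous_xst_max r).continuousOn) ω hω
  filter_upwards [mem_nhdsWithin_of_mem_nhds (Iio_mem_nhds hδ)] with c hc u hu v hv huv
  exact (h u hu v hv (huv.trans_lt hc)).le

lemma IsExcursion.dT_eq_zero {f : ℝ → ℝ} (hf : IsExcursion f) (hP : IsPJG f) {s t : ℝ}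
    (hs : s ∈ Icc (0 : ℝ) 1) (ht : t ∈ Icc (0 : ℝ) 1) : dT f s t = 0 := by
  refine abs_eq_zero.mp (le_antisymm (le_of_forall_pos_le_add fun ε hε => ?_) (abs_nonneg _))
  obtain ⟨R, hR⟩ := hf.exists_finset_approx hP (half_pos hε)
  linarith [hf.abs_dT_le hs.1 ht.1 (hR s hs) (hR t ht)]

/-- Quantitative form of the convergence, in terms of the Skorokhod distance. -/
lemma IsExcursion.exists_skor_bound {f : ℝ → ℝ} (hf : IsExcursion f) (hP : IsPJG f) {ε : ℝ}
    (hε : 0 < ε) : ∃ c > 0, ∀ g, IsExcursion g → skor g f < c →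
      ∀ s ∈ Icc (0 : ℝ) 1, ∀ t ∈ Icc (0 : ℝ) 1, |dL g s t - dL f s t| < ε ∧ |dT g s t| < ε := by
  have hη : 0 < ε / 8 := by positivity
  obtain ⟨R, hR⟩ := hf.exists_finset_approx hP hη
  have hk : (0 : ℝ) < R.card + 1 := by positivity
  have hω : 0 < ε / 8 / (R.card + 1) := by positivity
  have hsmall : ∀ᶠ c in 𝓝[>] (0 : ℝ), c * (2 + 10 * R.card) < ε / 8 := by
    have hlim : Tendsto (fun c : ℝ => c * (2 + 10 * R.card)) (𝓝 0) (𝓝 (0 * (2 + 10 * R.card))) :=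
      tendsto_id.mul_const _
    rw [zero_mul] at hlim
    exact (hlim.mono_left nhdsWithin_le_nhds).eventually (gt_mem_nhds hη)
  obtain ⟨c, hmod, hsm, hc⟩ :=
    ((hf.exists_modulus R hω).and (hsmall.and self_mem_nhdsWithin)).exists
  refine ⟨c, hc, fun g hg hgc s hs t ht => ?_⟩
  obtain ⟨e, he, hge⟩ := exists_orderIso_of_skor_lt hf hg hgc
  have hc0 : (0 : ℝ) < c := hc
  have hkc : 0 ≤ R.card * c := by positivity
  have hkω : R.card * (ε / 8 / (R.card + 1)) ≤ ε / 8 := by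
    rw [mul_div_assoc', div_le_iff₀ hk]
    linarith
  constructor
  · have h := abs_dL_timeChange_sub_le (R := R) (η := ε / 8) (ω := ε / 8 / (R.card + 1))
      hf hg hge hs.1 ht.1
      (by
        rintro u (rfl | rfl | rfl | rfl)
        · exact hR _ hs
        · exact hR _ ht
        · exact hR _ (he _ hs).1
        · exact hR _ (he _ ht).1)
      (by
        rintro r hr u (rfl | rfl)
        · exact hmod r hr _ (he _ hs).1 _ hs (he _ hs).2
        · exact hmod r hr _ (he _ ht).1 _ ht (he _ ht).2)
    refine h.trans_lt ?_
    nlinarith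
  · have h := hg.abs_dT_le hs.1 ht.1 (timeChange_approx hf hg hge (hR _ (he s hs).1))
      (timeChange_approx hf hg hge (hR _ (he t ht).1))
    refine h.trans_lt ?_
    nlinarith

theorem statement17 (f : ℝ → ℝ) (hf : IsExcursion f) (F : ℕ → ℝ → ℝ)
    (hF : ∀ n, IsExcursion (F n))
    (hconv : Tendsto (fun n => skor (F n) f) atTop (𝓝 0))
    (hPJG : IsPJG f) :
    TendstoUniformlyOn (fun n (p : ℝ × ℝ) => dL (F n) p.1 p.2)
        (fun p => dL f p.1 p.2) atTop (Icc (0:ℝ) 1 ×ˢ Icc (0:ℝ) 1) ∧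
    TendstoUniformlyOn (fun n (p : ℝ × ℝ) => dT (F n) p.1 p.2)
        (fun _ => (0:ℝ)) atTop (Icc (0:ℝ) 1 ×ˢ Icc (0:ℝ) 1) ∧
    TendstoUniformlyOn (fun n (p : ℝ × ℝ) => dV (F n) p.1 p.2)
        (fun p => dV f p.1 p.2) atTop (Icc (0:ℝ) 1 ×ˢ Icc (0:ℝ) 1) ∧
    (∀ s ∈ Icc (0:ℝ) 1, ∀ t ∈ Icc (0:ℝ) 1, dV f s t = 2 * dL f s t) := by
  have hdV : ∀ s ∈ Icc (0:ℝ) 1, ∀ t ∈ Icc (0:ℝ) 1, dV f s t = 2 * dL f s t := by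
    intro s hs t ht
    rw [dV, hf.dT_eq_zero hPJG hs ht, zero_add]
  have key : ∀ ε > 0, ∀ᶠ n in atTop, ∀ p ∈ Icc (0:ℝ) 1 ×ˢ Icc (0:ℝ) 1,
      |dL (F n) p.1 p.2 - dL f p.1 p.2| < ε ∧ |dT (F n) p.1 p.2| < ε := by
    intro ε hε
    obtain ⟨c, hc, h⟩ := hf.exists_skor_bound hPJG hε
    filter_upwards [hconv.eventually (gt_mem_nhds hc)] with n hn p hp
    exact h (F n) (hF n) hn p.1 hp.1 p.2 hp.2
  refine ⟨Metric.tendstoUniformlyOn_iff.mpr fun ε hε => ?_,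
    Metric.tendstoUniformlyOn_iff.mpr fun ε hε => ?_,
    Metric.tendstoUniformlyOn_iff.mpr fun ε hε => ?_, hdV⟩
  · filter_upwards [key ε hε] with n hn p hp
    rw [dist_comm, Real.dist_eq]
    exact (hn p hp).1
  · filter_upwards [key ε hε] with n hn p hp
    rw [dist_comm, Real.dist_eq, sub_zero]
    exact (hn p hp).2
  · filter_upwards [key (ε / 3) (by positivity)] with n hn p hp
    rw [dist_comm, Real.dist_eq, hdV p.1 hp.1 p.2 hp.2, dV]
    obtain ⟨h1, h2⟩ := hn p hp
    rw [abs_lt] at h1 h2 ⊢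
    constructor <;> linarith [h1.1, h1.2, h2.1, h2.2]
end
end

section
/- Let (X_n, d_n), n ≥ 0, be compact vernation trees (each nonempty), and let (X,d) be a nonempty compact metric space. If X_n → X for the Gromov–Hausdorff topology (i.e. the Gromov–Hausdorff distance between X_n and X tends to 0), then X is a compact vernation tree. -/
open Set Filter Topology

noncomputable section

/-- A geodesic metric space: any two points are joined by a geodesic. -/
def IsGeodesicSpace (X : Type*) [MetricSpace X] : Prop :=
  ∀ x y : X, ∃ γ : ℝ → X, γ 0 = x ∧ γ 1 = y ∧
    ∀ s ∈ Icc (0:ℝ) 1, ∀ t ∈ Icc (0:ℝ) 1, dist (γ s) (γ t) = |s - t| * dist x y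

/-- A loop on `X` based at `x`: a continuous map on `[0,1]`, injective on `[0,1)`,
with `γ 0 = γ 1 = x`. -/
def IsLoop {X : Type*} [MetricSpace X] (γ : ℝ → X) (x : X) : Prop :=
  ContinuousOn γ (Icc 0 1) ∧ InjOn γ (Ico 0 1) ∧ γ 0 = x ∧ γ 1 = x

/-- A vernation tree: a geodesic space in which two loops based at the same point
have equal images or images meeting only at the base point. -/
def IsVernationTree (X : Type*) [MetricSpace X] : Prop :=
  IsGeodesicSpace X ∧
    ∀ (x : X) (γ₁ γ₂ : ℝ → X), IsLoop γ₁ x → IsLoop γ₂ x →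
      γ₁ '' Icc 0 1 = γ₂ '' Icc 0 1 ∨ γ₁ '' Icc 0 1 ∩ γ₂ '' Icc 0 1 = {x}

/-- The concatenation of two paths parametrized by `[0, 1]`, parametrized by `[0, 2]`. -/
def concat {α : Type*} (f g : ℝ → α) (t : ℝ) : α := if t ≤ 1 then f t else g (t - 1)

lemma concat_of_le {α : Type*} (f g : ℝ → α) {t : ℝ} (h : t ≤ 1) : concat f g t = f t := if_pos h

lemma concat_of_ge {α : Type*} {f g : ℝ → α} (hfg : f 1 = g 0) {t : ℝ} (h : 1 ≤ t) :
    concat f g t = g (t - 1) := by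
  rcases h.eq_or_lt with rfl | h
  · simp [concat, hfg]
  · exact if_neg h.not_ge

lemma injOn_concat {α : Type*} {f g : ℝ → α} (hfg : f 1 = g 0) (hf : InjOn f (Icc 0 1))
    (hg : InjOn g (Icc 0 1)) {T : Set ℝ} (hT : T ⊆ Icc 0 2)
    (h : ∀ s ∈ Icc (0 : ℝ) 1, ∀ t ∈ Icc (0 : ℝ) 1, t + 1 ∈ T → f s = g t → s = t + 1) :
    InjOn (concat f g) T := by
  have key : ∀ s ∈ T, s ≤ 1 → ∀ t ∈ T, 1 ≤ t → concat f g s = concat f g t → s = t := by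
    intro s hs h1 t ht h2 hst
    rw [concat_of_le f g h1, concat_of_ge hfg h2] at hst
    have := h s ⟨(hT hs).1, h1⟩ (t - 1) (by constructor <;> linarith [(hT ht).2]) (by simpa) hst
    linarith
  intro s hs t ht hst
  rcases le_total s 1 with h1 | h1 <;> rcases le_total t 1 with h2 | h2
  · rw [concat_of_le f g h1, concat_of_le f g h2] at hst
    exact hf ⟨(hT hs).1, h1⟩ ⟨(hT ht).1, h2⟩ hst
  · exact key s hs h1 t ht h2 hst
  · exact (key t ht h2 s hs h1 hst.symm).symm
  · rw [concat_of_ge hfg h1, concat_of_ge hfg h2] at hst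
    have := hg (by constructor <;> linarith [(hT hs).2]) (by constructor <;> linarith [(hT ht).2])
      hst
    linarith

lemma image_concat {α : Type*} {f g : ℝ → α} (hfg : f 1 = g 0) :
    concat f g '' Icc 0 2 = f '' Icc 0 1 ∪ g '' Icc 0 1 := by
  rw [← Icc_union_Icc_eq_Icc (zero_le_one (α := ℝ)) one_le_two, image_union]
  congr 1
  · exact image_congr fun t ht => concat_of_le f g ht.2
  · have : Icc (0 : ℝ) 1 = (fun t => t - 1) '' Icc 1 2 := by
      rw [image_sub_const_Icc]; norm_num
    rw [this, image_image]
    exact image_congr fun t ht => concat_of_ge hfg ht.1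

section Arc

variable {X : Type*} [MetricSpace X]

/-- `A` is an arc from `x` to `y`: the image of an injective path from `x` to `y`. -/
def IsArc (A : Set X) (x y : X) : Prop :=
  ∃ f : ℝ → X, ContinuousOn f (Icc 0 1) ∧ InjOn f (Icc 0 1) ∧ f 0 = x ∧ f 1 = y ∧
    f '' Icc 0 1 = A

lemma IsArc.of_param {f : ℝ → X} {s t : ℝ} (hst : s < t) (hf : ContinuousOn f (Icc s t))
    (hi : InjOn f (Icc s t)) : IsArc (f '' Icc s t) (f s) (f t) := by
  have himg : (fun u : ℝ => (t - s) * u + s) '' Icc 0 1 = Icc s t := by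
    rw [image_affine_Icc' (sub_pos.2 hst)]
    simp
  have hmaps : MapsTo (fun u : ℝ => (t - s) * u + s) (Icc 0 1) (Icc s t) := by
    rw [← himg]
    exact mapsTo_image _ _
  refine ⟨fun u => f ((t - s) * u + s), hf.comp (by fun_prop) hmaps, ?_, by simp, by simp, ?_⟩
  · intro u hu v hv h
    have := hi (hmaps hu) (hmaps hv) h
    simp only [add_left_inj] at this
    exact mul_left_cancel₀ (sub_pos.2 hst).ne' this
  · rw [← himg, image_image]

lemma IsArc.symm {A : Set X} {x y : X} (h : IsArc A x y) : IsArc A y x := by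
  obtain ⟨f, hc, hi, rfl, rfl, rfl⟩ := h
  have himg : (fun u : ℝ => 1 - u) '' Icc 0 1 = Icc 0 1 := by simp
  have hmaps : MapsTo (fun u : ℝ => 1 - u) (Icc 0 1) (Icc 0 1) := by
    intro u hu
    rw [← himg]
    exact mem_image_of_mem _ hu
  refine ⟨fun u => f (1 - u), hc.comp (by fun_prop) hmaps, ?_, by simp, by simp, ?_⟩
  · intro u hu v hv h
    have := hi (hmaps hu) (hmaps hv) h
    simpa using this
  · conv_rhs => rw [← himg, image_image]

lemma IsArc.left_mem {A : Set X} {x y : X} (h : IsArc A x y) : x ∈ A := by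
  obtain ⟨f, -, -, rfl, -, rfl⟩ := h
  exact mem_image_of_mem _ (by simp)

lemma IsArc.right_mem {A : Set X} {x y : X} (h : IsArc A x y) : y ∈ A :=
  h.symm.left_mem

lemma IsArc.ne {A : Set X} {x y : X} (h : IsArc A x y) : x ≠ y := by
  obtain ⟨f, -, hi, rfl, rfl, rfl⟩ := h
  intro h
  exact zero_ne_one (hi (by simp) (by simp) h)

lemma IsArc.isCompact {A : Set X} {x y : X} (h : IsArc A x y) : IsCompact A := by
  obtain ⟨f, hc, -, -, -, rfl⟩ := h
  exact isCompact_Icc.image_of_continuousOn hc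

lemma IsArc.isClosed {A : Set X} {x y : X} (h : IsArc A x y) : IsClosed A :=
  h.isCompact.isClosed

lemma IsArc.isPreconnected {A : Set X} {x y : X} (h : IsArc A x y) : IsPreconnected A := by
  obtain ⟨f, hc, -, -, -, rfl⟩ := h
  exact isPreconnected_Icc.image f hc

/-- An interior point of an arc cuts it into two arcs. -/
lemma IsArc.split {A : Set X} {x y c : X} (h : IsArc A x y) (hc : c ∈ A) (hx : c ≠ x)
    (hy : c ≠ y) : ∃ A₁ A₂, IsArc A₁ x c ∧ IsArc A₂ c y ∧ A₁ ∪ A₂ = A ∧ A₁ ∩ A₂ = {c} := by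
  obtain ⟨f, hf, hi, rfl, rfl, rfl⟩ := h
  obtain ⟨t, ht, rfl⟩ := hc
  have h0 : 0 < t := ht.1.lt_of_ne fun h => hx (by rw [h])
  have h1 : t < 1 := ht.2.lt_of_ne fun h => hy (by rw [h])
  have s₁ : Icc 0 t ⊆ Icc 0 1 := Icc_subset_Icc_right ht.2
  have s₂ : Icc t 1 ⊆ Icc 0 1 := Icc_subset_Icc_left ht.1
  refine ⟨f '' Icc 0 t, f '' Icc t 1, .of_param h0 (hf.mono s₁) (hi.mono s₁),
    .of_param h1 (hf.mono s₂) (hi.mono s₂), ?_, ?_⟩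
  · rw [← image_union, Icc_union_Icc_eq_Icc ht.1 ht.2]
  · rw [← hi.image_inter s₁ s₂, Icc_inter_Icc_eq_singleton ht.1 ht.2, image_singleton]

lemma IsArc.exists_tail {A : Set X} {x y c : X} (h : IsArc A x y) (hc : c ∈ A) (hy : c ≠ y) :
    ∃ A' ⊆ A, IsArc A' c y := by
  rcases eq_or_ne c x with rfl | hx
  · exact ⟨A, subset_rfl, h⟩
  · obtain ⟨A₁, A₂, -, h₂, rfl, -⟩ := h.split hc hx hy
    exact ⟨A₂, subset_union_right, h₂⟩

lemma continuousOn_concat {f g : ℝ → X} (hf : ContinuousOn f (Icc 0 1))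
    (hg : ContinuousOn g (Icc 0 1)) (hfg : f 1 = g 0) :
    ContinuousOn (concat f g) (Icc 0 2) := by
  rw [← Icc_union_Icc_eq_Icc (zero_le_one (α := ℝ)) one_le_two]
  refine ContinuousOn.union_of_isClosed ?_ ?_ isClosed_Icc isClosed_Icc
  · exact hf.congr fun t ht => concat_of_le f g ht.2
  · refine (hg.comp (f := fun t => t - 1) (by fun_prop) fun t ht => ?_).congr
      fun t ht => concat_of_ge hfg ht.1
    constructor <;> linarith [ht.1, ht.2]

lemma IsArc.union {A B : Set X} {x y z : X} (hA : IsArc A x y) (hB : IsArc B y z)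
    (hAB : A ∩ B ⊆ {y}) : IsArc (A ∪ B) x z := by
  obtain ⟨f, hf, hfi, rfl, rfl, rfl⟩ := hA
  obtain ⟨g, hg, hgi, hfg, rfl, rfl⟩ := hB
  have hi : InjOn (concat f g) (Icc 0 2) := by
    refine injOn_concat hfg.symm hfi hgi subset_rfl fun s hs t ht _ hst => ?_
    have hm : f s = f 1 := hAB ⟨mem_image_of_mem f hs, hst ▸ mem_image_of_mem g ht⟩
    have h1 := hfi hs (by simp) hm
    have h2 := hgi ht (by simp) (hst.symm.trans (hm.trans hfg.symm))
    linarith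
  have := IsArc.of_param two_pos (continuousOn_concat hf hg hfg.symm) hi
  rw [image_concat hfg.symm, concat_of_le f g zero_le_one,
    concat_of_ge hfg.symm one_le_two] at this
  convert this using 2
  norm_num

/-- Two arcs with the same endpoints and no other common point form a loop. -/
lemma IsArc.exists_isLoop {A B : Set X} {x y : X} (hA : IsArc A x y) (hB : IsArc B y x)
    (hAB : A ∩ B ⊆ {x, y}) : ∃ γ : ℝ → X, IsLoop γ x ∧ γ '' Icc 0 1 = A ∪ B := by
  obtain ⟨f, hf, hfi, rfl, rfl, rfl⟩ := hA
  obtain ⟨g, hg, hgi, hfg, hgf, rfl⟩ := hB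
  have hi : InjOn (concat f g) (Ico 0 2) := by
    refine injOn_concat hfg.symm hfi hgi Ico_subset_Icc_self fun s hs t ht ht' hst => ?_
    rcases hAB ⟨mem_image_of_mem f hs, hst ▸ mem_image_of_mem g ht⟩ with hm | hm
    · have h2 := hgi ht (by simp) (hst.symm.trans (hm.trans hgf.symm))
      linarith [ht'.2]
    · have h1 := hfi hs (by simp) hm
      have h2 := hgi ht (by simp) (hst.symm.trans (hm.trans hfg.symm))
      linarith
  have himg : (fun u : ℝ => 2 * u) '' Icc 0 1 = Icc 0 2 := by
    rw [image_mul_left_Icc two_pos.le zero_le_one]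
    norm_num
  refine ⟨fun t => concat f g (2 * t), ⟨?_, ?_, ?_, ?_⟩, ?_⟩
  · refine (continuousOn_concat hf hg hfg.symm).comp (f := fun t => 2 * t) (by fun_prop) ?_
    rw [← himg]
    exact mapsTo_image _ _
  · intro s hs t ht hst
    have := hi (by constructor <;> linarith [hs.1, hs.2])
      (by constructor <;> linarith [ht.1, ht.2]) hst
    linarith
  · simp [concat]
  · change concat f g (2 * 1) = f 0
    rw [concat_of_ge hfg.symm (by norm_num), ← hgf]
    norm_num
  · rw [← image_concat hfg.symm, ← himg, image_image]

/-- A point of a loop other than the base point cuts it into two arcs. -/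
lemma IsLoop.split {γ : ℝ → X} {x z : X} (h : IsLoop γ x) (hz : z ∈ γ '' Icc 0 1) (hzx : z ≠ x) :
    ∃ A B, IsArc A x z ∧ IsArc B x z ∧ A ∪ B = γ '' Icc 0 1 ∧ A ∩ B ⊆ {x, z} := by
  obtain ⟨hc, hi, hx, hx'⟩ := h
  obtain ⟨t, ht, rfl⟩ := hz
  have h0 : 0 < t := ht.1.lt_of_ne fun h => hzx (by rw [← h, hx])
  have h1 : t < 1 := ht.2.lt_of_ne fun h => hzx (by rw [h, hx'])
  have hi' : InjOn γ (Ioc 0 1) := by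
    have hlast : ∀ s ∈ Ioo (0 : ℝ) 1, γ s ≠ γ 1 := fun s hs hs1 =>
      hs.1.ne' (hi ⟨hs.1.le, hs.2⟩ (by simp) (hs1.trans (hx'.trans hx.symm)))
    intro s hs u hu hsu
    rcases hs.2.eq_or_lt with rfl | hs1 <;> rcases hu.2.eq_or_lt with rfl | hu1
    · rfl
    · exact (hlast u ⟨hu.1, hu1⟩ hsu.symm).elim
    · exact (hlast s ⟨hs.1, hs1⟩ hsu).elim
    · exact hi ⟨hs.1.le, hs1⟩ ⟨hu.1.le, hu1⟩ hsu
  have hA := IsArc.of_param h0 (hc.mono (Icc_subset_Icc_right ht.2))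
    (hi.mono (Icc_subset_Ico_right h1))
  have hB := IsArc.of_param h1 (hc.mono (Icc_subset_Icc_left ht.1))
    (hi'.mono (Icc_subset_Ioc_left h0))
  rw [hx] at hA
  rw [hx'] at hB
  refine ⟨_, _, hA, hB.symm, ?_, ?_⟩
  · rw [← image_union, Icc_union_Icc_eq_Icc ht.1 ht.2]
  · rintro _ ⟨⟨s, hs, rfl⟩, u, hu, hsu⟩
    rcases hu.2.eq_or_lt with rfl | hu1
    · left
      rw [← hsu, hx']
    · right
      have := hi ⟨h0.le.trans hu.1, hu1⟩ ⟨hs.1, hs.2.trans_lt h1⟩ hsu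
      have hst : s = t := le_antisymm hs.2 (this ▸ hu.1)
      rw [hst]
      rfl

/-- An arc from a closed set `F` to a closed set `G` contains an arc
which meets `F ∪ G` at its endpoints only. -/
lemma IsArc.exists_crossing {A F G : Set X} {x y : X} (h : IsArc A x y) (hF : IsClosed F)
    (hG : IsClosed G) (hx : x ∈ F) (hy : y ∈ G) (hFG : ∀ z ∈ A, z ∈ F → z ∉ G) :
    ∃ c ∈ F, ∃ d ∈ G, ∃ A' ⊆ A, IsArc A' c d ∧ A' ∩ F ⊆ {c} ∧ A' ∩ G ⊆ {d} := by
  obtain ⟨f, hf, hi, rfl, rfl, rfl⟩ := h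
  obtain ⟨t, ⟨ht, htG⟩, hmin⟩ : ∃ t, IsLeast (Icc 0 1 ∩ f ⁻¹' G) t :=
    (isCompact_Icc.of_isClosed_subset (hf.preimage_isClosed_of_isClosed isClosed_Icc hG)
      inter_subset_left).exists_isLeast ⟨1, by simp, hy⟩
  have hsub : Icc 0 t ⊆ Icc 0 1 := Icc_subset_Icc_right ht.2
  obtain ⟨s, ⟨hs, hsF⟩, hmax⟩ : ∃ s, IsGreatest (Icc 0 t ∩ f ⁻¹' F) s :=
    (isCompact_Icc.of_isClosed_subset
      ((hf.mono hsub).preimage_isClosed_of_isClosed isClosed_Icc hF)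
      inter_subset_left).exists_isGreatest ⟨0, ⟨le_rfl, ht.1⟩, hx⟩
  have hst : s < t := hs.2.lt_of_ne fun h =>
    hFG (f s) (mem_image_of_mem f (hsub hs)) hsF (h ▸ htG)
  have hsub' : Icc s t ⊆ Icc 0 1 := Icc_subset_Icc hs.1 ht.2
  refine ⟨f s, hsF, f t, htG, f '' Icc s t, image_mono hsub',
    .of_param hst (hf.mono hsub') (hi.mono hsub'), ?_, ?_⟩
  · rintro _ ⟨⟨u, hu, rfl⟩, huF⟩
    rw [le_antisymm (hmax ⟨⟨hs.1.trans hu.1, hu.2⟩, huF⟩) hu.1]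
    rfl
  · rintro _ ⟨⟨u, hu, rfl⟩, huG⟩
    rw [le_antisymm hu.2 (hmin ⟨hsub' hu, huG⟩)]
    rfl

/-- An arc from a point to a closed set contains an arc from this point
which meets the closed set at its other endpoint only. -/
lemma IsArc.exists_first_hit {A G : Set X} {x y : X} (h : IsArc A x y) (hG : IsClosed G)
    (hx : x ∉ G) (hy : y ∈ G) : ∃ d ∈ G, ∃ A' ⊆ A, IsArc A' x d ∧ A' ∩ G ⊆ {d} := by
  obtain ⟨c, rfl, d, hd, A', hA', hA'c, -, hA'G⟩ :=
    h.exists_crossing isClosed_singleton hG (mem_singleton x) hy fun z _ hz => hz ▸ hx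
  exact ⟨d, hd, A', hA', hA'c, hA'G⟩

lemma IsArc.exists_trans {A B : Set X} {x y z : X} (hA : IsArc A x y) (hB : IsArc B y z)
    (hxz : x ≠ z) : ∃ C ⊆ A ∪ B, IsArc C x z := by
  by_cases hx : x ∈ B
  · obtain ⟨B', hB', h⟩ := hB.exists_tail hx hxz
    exact ⟨B', hB'.trans subset_union_right, h⟩
  obtain ⟨d, hd, A', hA', h, hA'B⟩ := hA.exists_first_hit hB.isClosed hx hB.left_mem
  rcases eq_or_ne d z with rfl | hdz
  · exact ⟨A', hA'.trans subset_union_left, h⟩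
  obtain ⟨B', hB', h'⟩ := hB.exists_tail hd hdz
  exact ⟨A' ∪ B', union_subset_union hA' hB',
    h.union h' ((inter_subset_inter_right _ hB').trans hA'B)⟩

/-- The points `x` and `y` coincide or are joined by an arc inside `W`. -/
def ArcJoinedIn (W : Set X) (x y : X) : Prop := x = y ∨ ∃ A ⊆ W, IsArc A x y

lemma ArcJoinedIn.symm {W : Set X} {x y : X} (h : ArcJoinedIn W x y) : ArcJoinedIn W y x :=
  h.imp Eq.symm fun ⟨A, hA, hxy⟩ => ⟨A, hA, hxy.symm⟩

lemma ArcJoinedIn.trans {W : Set X} {x y z : X} (h : ArcJoinedIn W x y)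
    (h' : ArcJoinedIn W y z) : ArcJoinedIn W x z := by
  rcases h with rfl | ⟨A, hA, h⟩
  · exact h'
  rcases h' with rfl | ⟨B, hB, h'⟩
  · exact .inr ⟨A, hA, h⟩
  rcases eq_or_ne x z with rfl | hxz
  · exact .inl rfl
  obtain ⟨C, hC, h''⟩ := h.exists_trans h' hxz
  exact .inr ⟨C, hC.trans (union_subset hA hB), h''⟩

/-- In a geodesic space, two distinct points are joined by an arc consisting of points between
them. -/
lemma IsGeodesicSpace.exists_isArc (hX : IsGeodesicSpace X) {x y : X} (hxy : x ≠ y) :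
    ∃ A, IsArc A x y ∧ ∀ w ∈ A, dist x w + dist w y = dist x y := by
  obtain ⟨γ, rfl, rfl, hγ⟩ := hX x y
  have hd : 0 < dist (γ 0) (γ 1) := dist_pos.2 hxy
  refine ⟨γ '' Icc 0 1, ⟨γ, ?_, ?_, rfl, rfl, rfl⟩, ?_⟩
  · refine (LipschitzOnWith.of_dist_le_mul (K := nndist (γ 0) (γ 1)) fun s hs t ht => ?_).continuousOn
    rw [hγ s hs t ht, mul_comm, coe_nndist, Real.dist_eq]
  · intro s hs t ht hst
    have := hγ s hs t ht
    rw [hst, dist_self, zero_eq_mul, abs_eq_zero, sub_eq_zero] at this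
    exact this.resolve_right hd.ne'
  · rintro _ ⟨t, ht, rfl⟩
    rw [hγ 0 (by simp) t ht, hγ t ht 1 (by simp), ← add_mul, zero_sub, abs_neg,
      abs_of_nonneg ht.1, abs_of_nonpos (by linarith [ht.2])]
    ring

lemma IsGeodesicSpace.arcJoinedIn (hX : IsGeodesicSpace X) {W : Set X} {x y : X}
    (h : ∀ w, dist x w + dist w y = dist x y → w ∈ W) : ArcJoinedIn W x y := by
  rcases eq_or_ne x y with rfl | hxy
  · exact .inl rfl
  · obtain ⟨A, hA, hAd⟩ := hX.exists_isArc hxy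
    exact .inr ⟨A, fun w hw => h w (hAd w hw), hA⟩

/-- If two arcs from `x` to `y` form a circle, then so do two arcs from `x` to `z`,
for any other point `z` of this circle. -/
lemma IsArc.exists_rebase {A B : Set X} {x y z : X} (hA : IsArc A x y) (hB : IsArc B x y)
    (hAB : A ∩ B ⊆ {x, y}) (hz : z ∈ A ∪ B) (hzx : z ≠ x) :
    ∃ A' B', IsArc A' x z ∧ IsArc B' x z ∧ A' ∪ B' = A ∪ B ∧ A' ∩ B' ⊆ {x, z} := by
  wlog hzA : z ∈ A generalizing A B
  · rw [union_comm]
    exact this hB hA (inter_comm A B ▸ hAB) (union_comm A B ▸ hz) (hz.resolve_left hzA)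
  rcases eq_or_ne z y with rfl | hzy
  · exact ⟨A, B, hA, hB, rfl, hAB⟩
  obtain ⟨A₁, A₂, h₁, h₂, rfl, h₁₂⟩ := hA.split hzA hzx hzy
  have hx : x ∉ A₂ := fun h => hzx (h₁₂.subset ⟨h₁.left_mem, h⟩).symm
  have hy : y ∉ A₁ := fun h => hzy (h₁₂.subset ⟨h, h₂.right_mem⟩).symm
  refine ⟨A₁, B ∪ A₂, h₁, hB.union h₂.symm ?_, ?_, ?_⟩
  · rintro w ⟨hwB, hwA⟩
    exact (hAB ⟨.inr hwA, hwB⟩).resolve_left fun h => hx (h ▸ hwA)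
  · rw [union_comm B, union_assoc]
  · rintro w ⟨hwA, hwB | hwA'⟩
    · exact .inl <| (hAB ⟨.inl hwA, hwB⟩).resolve_right fun h => hy (h ▸ hwA)
    · exact .inr (h₁₂.subset ⟨hwA, hwA'⟩)

/-- Two distinct points of a loop cut it into two arcs. -/
lemma IsLoop.exists_isArc {γ : ℝ → X} {x c d : X} (h : IsLoop γ x) (hc : c ∈ γ '' Icc 0 1)
    (hd : d ∈ γ '' Icc 0 1) (hcd : c ≠ d) :
    ∃ A B, IsArc A c d ∧ IsArc B c d ∧ A ∪ B = γ '' Icc 0 1 ∧ A ∩ B ⊆ {c, d} := by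
  rcases eq_or_ne c x with rfl | hcx
  · exact h.split hd hcd.symm
  obtain ⟨A, B, hA, hB, hU, hI⟩ := h.split hc hcx
  rw [← hU] at hd ⊢
  exact hA.symm.exists_rebase hB.symm (pair_comm x c ▸ hI) hd hcd.symm

/-- Two distinct loops with two common points contain a theta curve. -/
lemma IsLoop.exists_theta {γ₁ γ₂ : ℝ → X} {x y z : X} (h₁ : IsLoop γ₁ x) (h₂ : IsLoop γ₂ x)
    (hy₁ : y ∈ γ₁ '' Icc 0 1) (hy₂ : y ∈ γ₂ '' Icc 0 1) (hyx : y ≠ x)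
    (hz₁ : z ∉ γ₁ '' Icc 0 1) (hz₂ : z ∈ γ₂ '' Icc 0 1) :
    ∃ (a b : X) (P Q R : Set X), IsArc P a b ∧ IsArc Q a b ∧ IsArc R a b ∧
      P ∩ Q ⊆ {a, b} ∧ P ∩ R ⊆ {a, b} ∧ Q ∩ R ⊆ {a, b} := by
  have hx₁ : x ∈ γ₁ '' Icc 0 1 := ⟨0, by simp, h₁.2.2.1⟩
  have hC : IsClosed (γ₁ '' Icc 0 1) := (isCompact_Icc.image_of_continuousOn h₁.1).isClosed
  have hzx : z ≠ x := fun h => hz₁ (h ▸ hx₁)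
  have hzy : z ≠ y := fun h => hz₁ (h ▸ hy₁)
  obtain ⟨A, B, hA, hB, hyA, hAB⟩ :
      ∃ A B, IsArc A x z ∧ IsArc B x z ∧ y ∈ A ∧ A ∩ B ⊆ {x, z} := by
    obtain ⟨A, B, hA, hB, hU, hI⟩ := h₂.split hz₂ hzx
    rcases hU.symm.subset hy₂ with hy | hy
    · exact ⟨A, B, hA, hB, hy, hI⟩
    · exact ⟨B, A, hB, hA, hy, inter_comm A B ▸ hI⟩
  obtain ⟨A₁, A₂, hA₁, hA₂, rfl, hA₁₂⟩ := hA.split hyA hyx hzy.symm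
  have hA₂B : A₂ ∩ B ⊆ {z} := by
    rintro w ⟨hwA, hwB⟩
    refine (hAB ⟨.inr hwA, hwB⟩).resolve_left fun h => hyx ?_
    exact (hA₁₂.subset ⟨hA₁.left_mem, h ▸ hwA⟩).symm
  obtain ⟨c, hc, D, hD, hDzc, hDC⟩ := hA₂.symm.exists_first_hit hC hz₁ hy₁
  obtain ⟨d, hd, E, hE, hEzd, hEC⟩ := hB.symm.exists_first_hit hC hz₁ hx₁
  have hcd : c ≠ d := by
    rintro rfl
    have : c = z := hA₂B ⟨hD hDzc.right_mem, hE hEzd.right_mem⟩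
    exact hz₁ (this ▸ hc)
  have hR := hDzc.symm.union hEzd ((inter_subset_inter hD hE).trans hA₂B)
  have hRC : ∀ w ∈ γ₁ '' Icc 0 1, w ∈ D ∪ E → w ∈ ({c, d} : Set X) := by
    rintro w hw (hwD | hwE)
    · exact .inl (hDC ⟨hwD, hw⟩)
    · exact .inr (hEC ⟨hwE, hw⟩)
  obtain ⟨P, Q, hP, hQ, hPQ, hI⟩ := h₁.exists_isArc hc hd hcd
  exact ⟨c, d, P, Q, D ∪ E, hP, hQ, hR, hI, fun w hw => hRC w (hPQ.subset (.inl hw.1)) hw.2,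
    fun w hw => hRC w (hPQ.subset (.inr hw.1)) hw.2⟩

/-- In a vernation tree, any two points on either side of a sphere centred at the first of them
are separated by at most two points of this sphere. -/
lemma IsVernationTree.exists_separating_pair (hX : IsVernationTree X) {a b : X} {r : ℝ}
    (h0 : 0 < r) (hr : r < dist a b) :
    ∃ p q, dist a p = r ∧ dist a q = r ∧ ∀ A, IsArc A a b → p ∈ A ∨ q ∈ A := by
  have hdist {A : Set X} {u v : X} (hA : IsArc A u v) (hu : dist a u < r) (hv : r < dist a v) :
      ∃ w ∈ A, dist a w = r :=
    hA.isPreconnected.intermediate_value hA.left_mem hA.right_mem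
      (f := fun w => dist a w) (by fun_prop) ⟨hu.le, hv.le⟩
  obtain ⟨p, hp, hpb⟩ : ∃ p, dist a p = r ∧ dist a p + dist p b = dist a b := by
    obtain ⟨G, hG, hGd⟩ := hX.1.exists_isArc (dist_pos.1 (h0.trans hr))
    obtain ⟨p, hpG, hp⟩ := hdist hG (by simpa) hr
    exact ⟨p, hp, hGd p hpG⟩
  by_cases hS : ∀ S, IsArc S a b → p ∈ S
  · exact ⟨p, p, hp, hp, fun A hA => .inl (hS A hA)⟩
  push Not at hS
  obtain ⟨S, hS, hpS⟩ := hS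
  obtain ⟨G₀, hG₀, hG₀d⟩ := hX.1.exists_isArc (x := a) (y := p) (dist_pos.1 (by linarith))
  obtain ⟨G₁, hG₁, hG₁d⟩ := hX.1.exists_isArc (x := p) (y := b) (dist_pos.1 (by linarith))
  have hlt : ∀ w ∈ G₀, w ≠ p → dist a w < r := fun w hw hwp => by
    linarith [hG₀d w hw, dist_pos.2 hwp]
  have hgt : ∀ w ∈ G₁, w ≠ p → r < dist a w := fun w hw hwp => by
    linarith [hG₁d w hw, dist_pos.2 hwp, dist_triangle a w b, dist_comm p w]
  have hG : ∀ w ∈ G₀, w ∈ G₁ → w = p := fun w hw₀ hw₁ => by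
    by_contra hwp
    exact (hlt w hw₀ hwp).not_gt (hgt w hw₁ hwp)
  obtain ⟨u, hu, v, hv, S', hS'S, hS', hS'₀, hS'₁⟩ := hS.exists_crossing hG₀.isClosed hG₁.isClosed
    hG₀.left_mem hG₁.right_mem fun z hz hz₀ hz₁ => hpS (hG z hz₀ hz₁ ▸ hz)
  have hpS' : p ∉ S' := fun h => hpS (hS'S h)
  have hup : u ≠ p := fun h => hpS' (h ▸ hS'.left_mem)
  have hvp : v ≠ p := fun h => hpS' (h ▸ hS'.right_mem)
  obtain ⟨q, hqS', hq⟩ := hdist hS' (hlt u hu hup) (hgt v hv hvp)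
  have hqu : q ≠ u := by
    rintro rfl
    exact (hlt q hu hup).ne hq
  have hqv : q ≠ v := by
    rintro rfl
    exact (hgt q hv hvp).ne' hq
  refine ⟨p, q, hp, hq, fun T hT => ?_⟩
  by_contra! hTpq
  -- The arcs `K₀` and `K₁` from `p` to `q` form a circle.
  obtain ⟨A₀, hA₀G, hA₀⟩ := hG₀.exists_tail hu hup
  obtain ⟨A₁, hA₁G, hA₁⟩ := hG₁.symm.exists_tail hv hvp
  obtain ⟨S₀, S₁, hS₀, hS₁, rfl, hS₀₁⟩ := hS'.split hqS' hqu hqv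
  obtain ⟨K₀, hK₀, hK₀e⟩ : ∃ K, IsArc K p q ∧ K = A₀ ∪ S₀ :=
    ⟨_, hA₀.symm.union hS₀ fun w hw => hS'₀ ⟨.inl hw.2, hA₀G hw.1⟩, rfl⟩
  obtain ⟨K₁, hK₁, hK₁e⟩ : ∃ K, IsArc K p q ∧ K = A₁ ∪ S₁ :=
    ⟨_, hA₁.symm.union hS₁.symm fun w hw => hS'₁ ⟨.inr hw.2, hA₁G hw.1⟩, rfl⟩
  have hK : ∀ w ∈ K₀, w ∈ K₁ → w = p ∨ w = q := by
    intro w hw₀ hw₁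
    rw [hK₀e] at hw₀
    rw [hK₁e] at hw₁
    rcases hw₀ with hw₀ | hw₀ <;> rcases hw₁ with hw₁ | hw₁
    · exact .inl (hG w (hA₀G hw₀) (hA₁G hw₁))
    · have hwu : w = u := hS'₀ ⟨.inr hw₁, hA₀G hw₀⟩
      exact (hqu (hS₀₁.subset ⟨hS₀.left_mem, hwu ▸ hw₁⟩).symm).elim
    · have hwv : w = v := hS'₁ ⟨.inl hw₀, hA₁G hw₁⟩
      exact (hqv (hS₀₁.subset ⟨hwv ▸ hw₀, hS₁.right_mem⟩).symm).elim
    · exact .inr (hS₀₁.subset ⟨hw₀, hw₁⟩)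
  -- The arc `T` yields a crossing from `K₀` to `K₁` avoiding `p` and `q`.
  have hau : ArcJoinedIn {p, q}ᶜ a u := hX.1.arcJoinedIn fun w hw => by
    have hwr : dist a w < r := by linarith [hlt u hu hup, dist_nonneg (x := w) (y := u)]
    rintro (rfl | rfl)
    · exact hwr.ne hp
    · exact hwr.ne hq
  have hvb : ArcJoinedIn {p, q}ᶜ v b := hX.1.arcJoinedIn fun w hw => by
    have hwr : r < dist a w := by
      linarith [hG₁d v hv, dist_pos.2 hvp, dist_triangle a w b, dist_comm p v,
        dist_nonneg (x := v) (y := w)]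
    rintro (rfl | rfl)
    · exact hwr.ne' hp
    · exact hwr.ne' hq
  have hab : ArcJoinedIn {p, q}ᶜ a b := .inr ⟨T, by
    rintro w hw (rfl | rfl)
    · exact hTpq.1 hw
    · exact hTpq.2 hw, hT⟩
  obtain ⟨T', hT'W, hT'⟩ := (hau.symm.trans (hab.trans hvb.symm)).resolve_left hS'.ne
  obtain ⟨c, hc, d, hd, T'', hT''T, hT'', hT''₀, hT''₁⟩ := hT'.exists_crossing
    hK₀.isClosed hK₁.isClosed (hK₀e.symm.subset (.inl hA₀.left_mem))
    (hK₁e.symm.subset (.inl hA₁.left_mem)) fun w hw hw₀ hw₁ => hT'W hw (hK w hw₀ hw₁)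
  have hTp : p ∉ T'' := fun h => hT'W (hT''T h) (.inl rfl)
  have hTq : q ∉ T'' := fun h => hT'W (hT''T h) (.inr rfl)
  have hcp : c ≠ p := fun h => hTp (h ▸ hT''.left_mem)
  have hcq : c ≠ q := fun h => hTq (h ▸ hT''.left_mem)
  have hdp : d ≠ p := fun h => hTp (h ▸ hT''.right_mem)
  have hdq : d ≠ q := fun h => hTq (h ▸ hT''.right_mem)
  -- This gives a second circle through `p` and `c`, which does not contain `q`.
  obtain ⟨L₀, M₀, hL₀, hM₀, hLM₀, hI₀⟩ := hK₀.split hc hcp hcq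
  obtain ⟨L₁, M₁, hL₁, hM₁, hLM₁, hI₁⟩ := hK₁.split hd hdp hdq
  have hqL₀ : q ∉ L₀ := fun h => hcq (hI₀.subset ⟨h, hM₀.right_mem⟩).symm
  have hqL₁ : q ∉ L₁ := fun h => hdq (hI₁.subset ⟨h, hM₁.right_mem⟩).symm
  have hL₀K : L₀ ⊆ K₀ := subset_union_left.trans hLM₀.subset
  have hL₁K : L₁ ⊆ K₁ := subset_union_left.trans hLM₁.subset
  obtain ⟨γ₁, hγ₁, hγ₁e⟩ := hK₀.exists_isLoop hK₁.symm fun w hw => hK w hw.1 hw.2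
  obtain ⟨γ₂, hγ₂, hγ₂e⟩ := hL₀.exists_isLoop
    (hT''.union hL₁.symm fun w hw => hT''₁ ⟨hw.1, hL₁K hw.2⟩) (by
      rintro w ⟨hw₀, hw | hw⟩
      · exact .inr (hT''₀ ⟨hw, hL₀K hw₀⟩)
      · exact .inl ((hK w (hL₀K hw₀) (hL₁K hw)).resolve_right fun h => hqL₀ (h ▸ hw₀)))
  rcases hX.2 p γ₁ γ₂ hγ₁ hγ₂ with h | h <;> rw [hγ₁e, hγ₂e] at h
  · rcases h.subset (.inl hK₀.right_mem) with h | h | h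
    exacts [hqL₀ h, hTq h, hqL₁ h]
  · exact hcp (h.subset ⟨.inl hc, .inl hL₀.right_mem⟩)

end Arc

/-- The maps `f` and `g` are almost inverse almost isometries, up to an error `δ`. -/
structure IsApproxInverse {X Y : Type*} [MetricSpace X] [MetricSpace Y] (f : X → Y) (g : Y → X)
    (δ : ℝ) : Prop where
  dist_left : ∀ x x', |dist (f x) (f x') - dist x x'| ≤ δ
  dist_right : ∀ y y', |dist (g y) (g y') - dist y y'| ≤ δ
  dist_left_right : ∀ x y, |dist (f x) y - dist x (g y)| ≤ δ

lemma exists_isApproxInverse {X Y : Type*} [MetricSpace X] [CompactSpace X] [Nonempty X]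
    [MetricSpace Y] [CompactSpace Y] [Nonempty Y] {ε : ℝ} (h : GromovHausdorff.ghDist X Y < ε) :
    ∃ (f : X → Y) (g : Y → X), IsApproxInverse f g (2 * ε) := by
  rw [← GromovHausdorff.hausdorffDist_optimal] at h
  set φ := GromovHausdorff.optimalGHInjl X Y
  set ψ := GromovHausdorff.optimalGHInjr X Y
  have hφ : Isometry φ := GromovHausdorff.isometry_optimalGHInjl X Y
  have hψ : Isometry ψ := GromovHausdorff.isometry_optimalGHInjr X Y
  have hfin : Metric.hausdorffEDist (range φ) (range ψ) ≠ ⊤ :=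
    Metric.hausdorffEDist_ne_top_of_nonempty_of_bounded (range_nonempty _) (range_nonempty _)
      (isCompact_range hφ.continuous).isBounded (isCompact_range hψ.continuous).isBounded
  have hf : ∀ x, ∃ y, dist (φ x) (ψ y) < ε := fun x => by
    obtain ⟨_, ⟨y, rfl⟩, hy⟩ := Metric.exists_dist_lt_of_hausdorffDist_lt (mem_range_self x) h hfin
    exact ⟨y, hy⟩
  have hg : ∀ y, ∃ x, dist (φ x) (ψ y) < ε := fun y => by
    obtain ⟨_, ⟨x, rfl⟩, hx⟩ := Metric.exists_dist_lt_of_hausdorffDist_lt' (mem_range_self y) h hfin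
    exact ⟨x, hx⟩
  choose f hf using hf
  choose g hg using hg
  have hquad : ∀ a b c d : GromovHausdorff.OptimalGHCoupling X Y, dist a c < ε → dist b d < ε →
      |dist a b - dist c d| ≤ 2 * ε := fun a b c d hac hbd => by
    have := dist_dist_dist_le a b c d
    rw [Real.dist_eq] at this
    linarith
  refine ⟨f, g, fun x x' => ?_, fun y y' => ?_, fun x y => ?_⟩
  · rw [← hφ.dist_eq, ← hψ.dist_eq, abs_sub_comm]
    exact hquad _ _ _ _ (hf x) (hf x')
  · rw [← hφ.dist_eq, ← hψ.dist_eq]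
    exact hquad _ _ _ _ (hg y) (hg y')
  · rw [← hφ.dist_eq, ← hψ.dist_eq, abs_sub_comm, dist_comm (φ x), dist_comm (ψ (f x))]
    have := dist_dist_dist_le (φ (g y)) (φ x) (ψ y) (ψ (f x))
    rw [Real.dist_eq] at this
    linarith [hf x, hg y]

lemma Filter.Tendsto.of_abs_sub_le {ι : Type*} {l : Filter ι} {u v δ : ι → ℝ} {c : ℝ}
    (hv : Tendsto v l (𝓝 c)) (hδ : Tendsto δ l (𝓝 0)) (h : ∀ i, |u i - v i| ≤ δ i) :
    Tendsto u l (𝓝 c) := by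
  have := (squeeze_zero_norm h hδ).add hv
  simpa using this

section Limit

variable {X : ℕ → Type*} [∀ n, MetricSpace (X n)] {Y : Type*} [MetricSpace Y]
  {f : ∀ n, X n → Y} {g : ∀ n, Y → X n} {δ : ℕ → ℝ} {l : Filter ℕ}

lemma tendsto_dist_right (h : ∀ n, IsApproxInverse (f n) (g n) (δ n)) (hδ : Tendsto δ l (𝓝 0))
    (y y' : Y) : Tendsto (fun n => dist (g n y) (g n y')) l (𝓝 (dist y y')) :=
  tendsto_const_nhds.of_abs_sub_le hδ fun n => (h n).dist_right y y'

lemma tendsto_left_right (h : ∀ n, IsApproxInverse (f n) (g n) (δ n)) (hδ : Tendsto δ l (𝓝 0))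
    (y : Y) : Tendsto (fun n => f n (g n y)) l (𝓝 y) :=
  tendsto_iff_dist_tendsto_zero.2 <| tendsto_const_nhds.of_abs_sub_le hδ fun n => by
    simpa using (h n).dist_left_right (g n y) y

lemma Ultrafilter.exists_tendsto [CompactSpace Y] (U : Ultrafilter ℕ) (u : ℕ → Y) :
    ∃ y, Tendsto u U (𝓝 y) :=
  ⟨_, (U.map u).le_nhds_lim⟩

lemma isGeodesicSpace_of_isApproxInverse [CompactSpace Y] (hX : ∀ n, IsGeodesicSpace (X n))
    (h : ∀ n, IsApproxInverse (f n) (g n) (δ n)) (hδ : Tendsto δ atTop (𝓝 0)) :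
    IsGeodesicSpace Y := by
  intro x y
  have hδ' : Tendsto δ (hyperfilter ℕ) (𝓝 0) := hδ.mono_left Nat.hyperfilter_le_atTop
  choose γ hγ0 hγ1 hγ using fun n => hX n (g n x) (g n y)
  choose Γ hΓ using fun t => (hyperfilter ℕ).exists_tendsto fun n => f n (γ n t)
  refine ⟨Γ, tendsto_nhds_unique (hΓ 0) ?_, tendsto_nhds_unique (hΓ 1) ?_, fun s hs t ht => ?_⟩
  · simpa only [hγ0] using tendsto_left_right h hδ' x
  · simpa only [hγ1] using tendsto_left_right h hδ' y
  · refine tendsto_nhds_unique ((hΓ s).dist (hΓ t)) ?_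
    refine ((tendsto_dist_right h hδ' x y).const_mul |s - t|).of_abs_sub_le hδ' fun n => ?_
    rw [← hγ n s hs t ht]
    exact (h n).dist_left _ _

/-- An arc of the limit space which avoids two points can be lifted to the approximating spaces,
avoiding points close to these two points. -/
lemma IsArc.eventually_arcJoinedIn {P : Set Y} {a b p q : Y} (hP : IsArc P a b) (hp : p ∉ P)
    (hq : q ∉ P) (hX : ∀ n, IsGeodesicSpace (X n)) (h : ∀ n, IsApproxInverse (f n) (g n) (δ n))
    (hδ : Tendsto δ l (𝓝 0)) {p' q' : ∀ n, X n} (hp' : Tendsto (fun n => f n (p' n)) l (𝓝 p))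
    (hq' : Tendsto (fun n => f n (q' n)) l (𝓝 q)) :
    ∀ᶠ n in l, ArcJoinedIn {p' n, q' n}ᶜ (g n a) (g n b) := by
  obtain ⟨ε₁, hε₁, hpP⟩ := Metric.isOpen_iff.1 hP.isClosed.isOpen_compl p hp
  obtain ⟨ε₂, hε₂, hqP⟩ := Metric.isOpen_iff.1 hP.isClosed.isOpen_compl q hq
  obtain ⟨ε, hε, hεp, hεq⟩ : ∃ ε > 0, (∀ w ∈ P, ε ≤ dist w p) ∧ ∀ w ∈ P, ε ≤ dist w q :=
    ⟨min ε₁ ε₂, lt_min hε₁ hε₂,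
      fun w hw => (min_le_left _ _).trans (not_lt.1 fun hlt => hpP hlt hw),
      fun w hw => (min_le_right _ _).trans (not_lt.1 fun hlt => hqP hlt hw)⟩
  obtain ⟨γ, hγ, -, rfl, rfl, rfl⟩ := hP
  obtain ⟨η, hη, hγη⟩ := Metric.uniformContinuousOn_iff.1
    (isCompact_Icc.uniformContinuousOn_of_continuous hγ) (ε / 4) (by positivity)
  obtain ⟨N, hN⟩ := exists_nat_one_div_lt hη
  have hN0 : (0 : ℝ) < N + 1 := by positivity
  filter_upwards [hδ.eventually_lt_const (show (0 : ℝ) < ε / 8 by positivity),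
    Metric.tendsto_nhds.1 hp' (ε / 4) (by positivity),
    Metric.tendsto_nhds.1 hq' (ε / 4) (by positivity)] with n hδn hpn hqn
  have hstep : ∀ s ∈ Icc (0 : ℝ) 1, ∀ t ∈ Icc (0 : ℝ) 1, dist (γ s) (γ t) < ε / 4 →
      ArcJoinedIn {p' n, q' n}ᶜ (g n (γ s)) (g n (γ t)) := fun s hs t ht hst => by
    have havoid : ∀ z, (∀ w ∈ γ '' Icc 0 1, ε ≤ dist w z) → ∀ z', dist (f n z') z < ε / 4 →
        dist (g n (γ s)) z' + dist z' (g n (γ t)) ≠ dist (g n (γ s)) (g n (γ t)) := by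
      intro z hz z' hz' heq
      have h₁ := (abs_le.1 ((h n).dist_right (γ s) (γ t))).2
      have h₂ := (abs_le.1 ((h n).dist_left_right z' (γ s))).2
      have h₃ := hz _ (mem_image_of_mem γ hs)
      have h₄ := dist_triangle (γ s) (f n z') z
      rw [dist_comm (γ s) (f n z')] at h₄
      rw [dist_comm z'] at h₂
      linarith [dist_nonneg (x := z') (y := g n (γ t))]
    refine (hX n).arcJoinedIn fun w hw => ?_
    rintro (rfl | rfl)
    · exact havoid p hεp _ hpn hw
    · exact havoid q hεq _ hqn hw
  have hmem : ∀ i ≤ N + 1, (i : ℝ) / (N + 1) ∈ Icc (0 : ℝ) 1 := fun i hi =>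
    ⟨by positivity, (div_le_one hN0).2 (by exact_mod_cast hi)⟩
  have hchain : ∀ i ≤ N + 1, ArcJoinedIn {p' n, q' n}ᶜ (g n (γ 0)) (g n (γ (i / (N + 1)))) := by
    intro i
    induction i with
    | zero =>
      intro _
      left
      simp
    | succ i ih =>
      intro hi
      refine (ih (by lia)).trans (hstep _ (hmem i (by lia)) _ (hmem _ hi) ?_)
      refine hγη _ (hmem i (by lia)) _ (hmem _ hi) ?_
      rw [Real.dist_eq, ← sub_div, Nat.cast_succ, sub_add_cancel_left, abs_div, abs_neg, abs_one,
        abs_of_pos hN0]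
      exact hN
  have := hchain (N + 1) le_rfl
  rwa [Nat.cast_succ, div_self hN0.ne'] at this

/-- A limit of vernation trees contains no theta curve. -/
lemma not_theta_of_isApproxInverse [CompactSpace Y] (hX : ∀ n, IsVernationTree (X n))
    (h : ∀ n, IsApproxInverse (f n) (g n) (δ n)) (hδ : Tendsto δ atTop (𝓝 0)) {a b : Y}
    {P Q R : Set Y} (hP : IsArc P a b) (hQ : IsArc Q a b) (hR : IsArc R a b)
    (hPQ : P ∩ Q ⊆ {a, b}) (hPR : P ∩ R ⊆ {a, b}) (hQR : Q ∩ R ⊆ {a, b}) : False := by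
  have hδ' : Tendsto δ (hyperfilter ℕ) (𝓝 0) := hδ.mono_left Nat.hyperfilter_le_atTop
  have hab : 0 < dist a b := dist_pos.2 hP.ne
  set r := dist a b / 2 with hr
  have hev : ∀ᶠ n in (hyperfilter ℕ : Filter ℕ), r < dist (g n a) (g n b) :=
    (tendsto_dist_right h hδ' a b).eventually_const_lt (by linarith)
  have hsep : ∀ n, ∃ p q : X n, r < dist (g n a) (g n b) → dist (g n a) p = r ∧
      dist (g n a) q = r ∧ ∀ A, IsArc A (g n a) (g n b) → p ∈ A ∨ q ∈ A := fun n => by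
    by_cases hn : r < dist (g n a) (g n b)
    · obtain ⟨p, q, hpq⟩ := (hX n).exists_separating_pair (by linarith) hn
      exact ⟨p, q, fun _ => hpq⟩
    · exact ⟨g n a, g n a, fun hn' => (hn hn').elim⟩
  choose p' q' hpq using hsep
  obtain ⟨p, hp⟩ := (hyperfilter ℕ).exists_tendsto fun n => f n (p' n)
  obtain ⟨q, hq⟩ := (hyperfilter ℕ).exists_tendsto fun n => f n (q' n)
  have hlim {z : Y} {z' : ∀ n, X n} (hz : Tendsto (fun n => f n (z' n)) (hyperfilter ℕ) (𝓝 z))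
      (hz' : ∀ n, r < dist (g n a) (g n b) → dist (g n a) (z' n) = r) :
      z ∉ ({a, b} : Set Y) := by
    have hdist : dist z a = r := by
      refine tendsto_nhds_unique (hz.dist tendsto_const_nhds) ?_
      refine Tendsto.of_abs_sub_le (v := fun n => dist (z' n) (g n a)) ?_ hδ'
        fun n => (h n).dist_left_right _ _
      refine tendsto_const_nhds.congr' (hev.mono fun n hn => ?_)
      exact ((dist_comm _ _).trans (hz' n hn)).symm
    rintro (rfl | rfl)
    · rw [dist_self] at hdist
      linarith
    · rw [dist_comm] at hdist
      linarith
  have hpab := hlim hp fun n hn => (hpq n hn).1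
  have hqab := hlim hq fun n hn => (hpq n hn).2.1
  have hmeet : ∀ A, IsArc A a b → p ∈ A ∨ q ∈ A := fun A hA => by
    by_contra! hA'
    obtain ⟨n, hn, hn'⟩ := (hev.and (hA.eventually_arcJoinedIn hA'.1 hA'.2 (fun n => (hX n).1) h
      hδ' hp hq)).exists
    have hr0 : 0 < r := by linarith
    obtain ⟨B, hB, hBab⟩ := hn'.resolve_left (dist_pos.1 (hr0.trans hn))
    rcases (hpq n hn).2.2 B hBab with hm | hm
    · exact hB hm (.inl rfl)
    · exact hB hm (.inr rfl)
  have hPQ' := fun z (hz : z ∉ ({a, b} : Set Y)) hP hQ => hz (hPQ ⟨hP, hQ⟩)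
  have hPR' := fun z (hz : z ∉ ({a, b} : Set Y)) hP hR => hz (hPR ⟨hP, hR⟩)
  have hQR' := fun z (hz : z ∉ ({a, b} : Set Y)) hQ hR => hz (hQR ⟨hQ, hR⟩)
  have := hmeet P hP
  have := hmeet Q hQ
  have := hmeet R hR
  grind

end Limit

theorem statement19 (X : ℕ → Type*) [∀ n, MetricSpace (X n)]
    [∀ n, CompactSpace (X n)] [∀ n, Nonempty (X n)]
    (hvern : ∀ n, IsVernationTree (X n))
    (Y : Type*) [MetricSpace Y] [CompactSpace Y] [Nonempty Y]
    (hconv : Tendsto (fun n => GromovHausdorff.ghDist (X n) Y) atTop (𝓝 0)) :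
    IsVernationTree Y := by
  have hε : ∀ n : ℕ, GromovHausdorff.ghDist (X n) Y <
      GromovHausdorff.ghDist (X n) Y + 1 / ((n : ℝ) + 1) := fun n =>
    lt_add_of_pos_right _ Nat.one_div_pos_of_nat
  choose f g hfg using fun n => exists_isApproxInverse (hε n)
  have hδ : Tendsto (fun n : ℕ => 2 * (GromovHausdorff.ghDist (X n) Y + 1 / ((n : ℝ) + 1))) atTop
      (𝓝 0) := by
    simpa using (hconv.add tendsto_one_div_add_atTop_nhds_zero_nat).const_mul 2
  have hnot {γ₁ γ₂ : ℝ → Y} {x y z : Y} (h₁ : IsLoop γ₁ x) (h₂ : IsLoop γ₂ x)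
      (hy₁ : y ∈ γ₁ '' Icc 0 1) (hy₂ : y ∈ γ₂ '' Icc 0 1) (hyx : y ≠ x)
      (hz : z ∈ γ₂ '' Icc 0 1) : z ∈ γ₁ '' Icc 0 1 := by
    by_contra hz₁
    obtain ⟨a, b, P, Q, R, hP, hQ, hR, hPQ, hPR, hQR⟩ := h₁.exists_theta h₂ hy₁ hy₂ hyx hz₁ hz
    exact not_theta_of_isApproxInverse hvern hfg hδ hP hQ hR hPQ hPR hQR
  refine ⟨isGeodesicSpace_of_isApproxInverse (fun n => (hvern n).1) hfg hδ,
    fun x γ₁ γ₂ h₁ h₂ => ?_⟩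
  by_cases hI : γ₁ '' Icc 0 1 ∩ γ₂ '' Icc 0 1 ⊆ {x}
  · exact .inr <| hI.antisymm <| singleton_subset_iff.2
      ⟨⟨0, by simp, h₁.2.2.1⟩, ⟨0, by simp, h₂.2.2.1⟩⟩
  · obtain ⟨y, ⟨hy₁, hy₂⟩, hyx⟩ := not_subset.1 hI
    exact .inl <| Subset.antisymm (fun z hz => hnot h₂ h₁ hy₂ hy₁ hyx hz)
      fun z hz => hnot h₁ h₂ hy₁ hy₂ hyx hz
end
end
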